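/- arXiv:2402.16120 — 2 statements merged into one kernel-verified Lean document; each statement's English description precedes it below -/
import Mathlib

section
/- For n = 1, the function Ψ_γ(x) = ∫_R dγ' c^{2γ'/(ic)} e^{−γ' x/(ic)} Γ((γ+γ')/(ic) + 1/2) Γ((−γ+γ')/(ic) + 1/2), where the integral is over real γ' and c > 0, satisfies the one-particle B_1 Toda (Bessel-type) equation (−d²/dx² + d/dx + (1/c²)e^{x}) Ψ_γ(x) = (γ²/c² + 1/4) Ψ_γ(x). -/
open MeasureTheory

namespace B1Toda

open Filter Topology

lemma gamma_bound : ∃ C : ℝ, 0 ≤ C ∧ ∀ w : ℂ, 1/2 ≤ w.re → w.re ≤ 3/2 →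
    ‖Complex.Gamma w‖ * (1 + w.im^2) ≤ C := by
  have hcont : ContinuousOn Real.Gamma (Set.Icc (5/2) (7/2)) := by
    intro y hy
    apply ContinuousAt.continuousWithinAt
    apply (Real.differentiableAt_Gamma _).continuousAt
    intro m hm
    have : (0:ℝ) ≤ m := Nat.cast_nonneg m
    have := hy.1
    linarith
  obtain ⟨M, hM⟩ := isCompact_Icc.exists_bound_of_continuousOn hcont
  have hM0 : 0 ≤ M := (norm_nonneg _).trans (hM 3 (by constructor <;> norm_num))
  refine ⟨5 * M, by positivity, fun w h1 h2 => ?_⟩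
  have hw0 : w ≠ 0 := by
    rintro rfl
    simp at h1
    linarith
  have hw1 : w + 1 ≠ 0 := by
    intro h
    have := congrArg Complex.re h
    simp at this
    linarith
  have hG : Complex.Gamma (w + 1 + 1) = (w + 1) * (w * Complex.Gamma w) := by
    rw [Complex.Gamma_add_one _ hw1, Complex.Gamma_add_one _ hw0]
  have hre : (w + 1 + 1).re = w.re + 2 := by simp; ring
  have hGn : ‖Complex.Gamma (w + 1 + 1)‖ ≤ M := by
    refine le_trans ?_ (hM (w.re + 2) ⟨by linarith, by linarith⟩)
    rw [Complex.Gamma_eq_integral (by rw [hre]; linarith), Real.Gamma_eq_integral (by linarith),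
      Complex.GammaIntegral]
    refine le_trans (norm_integral_le_integral_norm _) (le_trans (le_of_eq ?_) (le_abs_self _))
    apply setIntegral_congr_fun measurableSet_Ioi
    intro y hy
    simp only [norm_mul]
    rw [Complex.norm_cpow_eq_rpow_re_of_pos hy, Complex.norm_real, Real.norm_eq_abs,
      abs_of_pos (Real.exp_pos _)]
    congr 2
    simp; ring
  rw [hG, norm_mul, norm_mul] at hGn
  have hsq : ‖w‖^2 = w.re^2 + w.im^2 := by
    rw [Complex.sq_norm, Complex.normSq_apply]; ring
  have hsq1 : ‖w+1‖^2 = (w.re+1)^2 + w.im^2 := by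
    rw [Complex.sq_norm, Complex.normSq_apply]; simp; ring
  have hle : ‖w‖ ≤ ‖w+1‖ := by
    apply le_of_sq_le_sq _ (norm_nonneg _) |> fun h => h
    rw [hsq, hsq1]; nlinarith
  have h3 : ‖w‖^2 * ‖Complex.Gamma w‖ ≤ M := by
    refine le_trans ?_ hGn
    rw [sq, mul_assoc]
    gcongr
  have h4 : 1 + w.im^2 ≤ 5 * ‖w‖^2 := by rw [hsq]; nlinarith
  calc _ ≤ ‖Complex.Gamma w‖ * (5 * ‖w‖^2) := by gcongr
    _ = 5 * (‖w‖^2 * ‖Complex.Gamma w‖) := by ring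
    _ ≤ _ := by gcongr

lemma div_Ic (c : ℝ) (w : ℂ) : w / (Complex.I * c) = ⟨w.im / c, -(w.re / c)⟩ := by
  have : w / (Complex.I * c) = (-Complex.I * w) / (c : ℂ) := by
    rw [← div_div, Complex.div_I]; ring_nf
  rw [this]
  apply Complex.ext
  · rw [Complex.div_ofReal_re]; simp
  · rw [Complex.div_ofReal_im]; simp [neg_div]

lemma gamma_bound2 (c γ : ℝ) (hc : 0 < c) : ∃ C : ℝ, 0 ≤ C ∧ ∀ z : ℂ, 0 ≤ z.im → z.im ≤ c →
    ‖Complex.Gamma (((γ : ℂ) + z) / (Complex.I * c) + 1 / 2)‖ ≤ C / (1 + z.re^2) := by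
  obtain ⟨C, hC, h⟩ := gamma_bound
  refine ⟨C * (1 + 2*γ^2 + 2*c^2), by positivity, fun z h1 h2 => ?_⟩
  have hre : (((γ : ℂ) + z) / (Complex.I * c) + 1 / 2).re = z.im / c + 1/2 := by
    rw [div_Ic]; simp
  have him : (((γ : ℂ) + z) / (Complex.I * c) + 1 / 2).im = -((γ + z.re) / c) := by
    rw [div_Ic]; simp
  have h0 : 0 ≤ z.im / c := by positivity
  have h0' : z.im / c ≤ 1 := by rw [div_le_one hc]; exact h2
  have := h _ (by rw [hre]; linarith) (by rw [hre]; linarith)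
  rw [him] at this
  rw [le_div_iff₀ (by positivity)]
  set N := ‖Complex.Gamma (((γ : ℂ) + z) / (Complex.I * c) + 1 / 2)‖
  have hN : 0 ≤ N := norm_nonneg _
  have key : 1 + z.re^2 ≤ (1 + (-((γ + z.re) / c))^2) * (1 + 2*γ^2 + 2*c^2) := by
    set u := (γ + z.re) / c with hu
    have : z.re = c * u - γ := by rw [hu]; field_simp; ring
    rw [this]
    nlinarith [sq_nonneg (c*u + γ), mul_nonneg (sq_nonneg u) (sq_nonneg γ), sq_nonneg c, sq_nonneg u]
  calc _ ≤ N * ((1 + (-((γ + z.re) / c))^2) * (1 + 2*γ^2 + 2*c^2)) := by gcongr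
    _ = (N * (1 + (-((γ + z.re) / c))^2)) * (1 + 2*γ^2 + 2*c^2) := by ring
    _ ≤ _ := by gcongr

lemma shift (G : ℂ → ℂ) (c C : ℝ) (hc : 0 < c)
    (hd : ∀ z : ℂ, 0 ≤ z.im → z.im ≤ c → DifferentiableAt ℂ G z)
    (hb : ∀ z : ℂ, 0 ≤ z.im → z.im ≤ c → ‖G z‖ ≤ C / (1 + z.re^2)) :
    ∫ t : ℝ, G t = ∫ t : ℝ, G (t + c * Complex.I) := by
  have hint : ∀ y : ℝ, 0 ≤ y → y ≤ c → Integrable (fun t : ℝ => G (t + y * Complex.I)) := by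
    intro y h0 h1
    refine Integrable.mono' (integrable_inv_one_add_sq.const_mul C) ?_ ?_
    · apply Continuous.aestronglyMeasurable
      rw [continuous_iff_continuousAt]
      intro t
      have := (hd (t + y * Complex.I) (by simpa) (by simpa)).continuousAt
      exact ContinuousAt.comp (f := fun t : ℝ => (t + y * Complex.I : ℂ)) this
        (by fun_prop)
    · refine Eventually.of_forall fun t => ?_
      have := hb (t + y * Complex.I) (by simpa) (by simpa)
      simpa [div_eq_mul_inv] using this
  have hi0 := hint 0 le_rfl hc.le
  have hi1 := hint c hc.le le_rfl
  have t0 := intervalIntegral_tendsto_integral hi0 tendsto_neg_atTop_atBot tendsto_id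
  have t1 := intervalIntegral_tendsto_integral hi1 tendsto_neg_atTop_atBot tendsto_id
  have hz : Tendsto (fun T : ℝ => C / (1 + T^2) * |c - 0|) atTop (𝓝 0) := by
    suffices h : Tendsto (fun T : ℝ => C / (1 + T^2)) atTop (𝓝 0) by
      simpa using h.mul_const |c - 0|
    apply Tendsto.const_div_atTop
    exact tendsto_atTop_add_const_left _ _ (tendsto_pow_atTop two_ne_zero)
  have hv : ∀ s : ℝ, s^2 = 1 → Tendsto (fun T : ℝ => ∫ y : ℝ in (0:ℝ)..c,
      G ((s * T : ℝ) + y * Complex.I)) atTop (𝓝 0) := by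
    intro s hs
    refine squeeze_zero_norm (fun T => ?_) hz
    apply intervalIntegral.norm_integral_le_of_norm_le_const
    intro y hy
    rw [Set.uIoc_of_le hc.le] at hy
    have := hb ((s * T : ℝ) + y * Complex.I) (by simpa using hy.1.le) (by simpa using hy.2)
    have e : ((s * T : ℝ) + y * Complex.I : ℂ).re = s * T := by simp
    rw [e, mul_pow, hs, one_mul] at this
    exact this
  have r1 := hv 1 (by norm_num)
  have r2 := hv (-1) (by norm_num)
  have hsum := ((t0.sub t1).add (r1.const_smul Complex.I)).sub (r2.const_smul Complex.I)
  have hzero : ∀ T : ℝ, ((∫ x : ℝ in (-T)..(id T), G (x + (0:ℝ) * Complex.I)) -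
      (∫ x : ℝ in (-T)..(id T), G (x + c * Complex.I)) +
      Complex.I • (∫ y : ℝ in (0:ℝ)..c, G ((1 * T : ℝ) + y * Complex.I))) -
      Complex.I • (∫ y : ℝ in (0:ℝ)..c, G ((-1 * T : ℝ) + y * Complex.I)) = 0 := by
    intro T
    have := Complex.integral_boundary_rect_eq_zero_of_differentiableOn G ⟨-T, 0⟩ ⟨T, c⟩ (by
      intro z hz
      rw [Complex.mem_reProdIm] at hz
      have := hz.2
      simp only [Set.uIcc_of_le hc.le] at this
      exact (hd z this.1 this.2).differentiableWithinAt)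
    simpa using this
  have := tendsto_nhds_unique (hsum.congr hzero) tendsto_const_nhds
  simp only [smul_zero, add_zero, sub_zero] at this
  simpa using sub_eq_zero.mp this

lemma norm_exp (c x t : ℝ) : ‖Complex.exp (-(t : ℂ) * (x : ℂ) / (Complex.I * c))‖ = 1 := by
  rw [Complex.norm_exp, div_Ic]; simp

lemma deriv_int (c : ℝ) (f : ℝ → ℂ) (hf : Continuous f) (h0 : Integrable f)
    (h1 : Integrable fun t : ℝ => -((t : ℂ) / (Complex.I * c)) * f t) (x : ℝ) :
    Integrable (fun t : ℝ => Complex.exp (-(t : ℂ) * (x : ℂ) / (Complex.I * c)) * 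
      (-((t : ℂ) / (Complex.I * c)) * f t)) ∧
    HasDerivAt (fun x : ℝ => ∫ t : ℝ, Complex.exp (-(t : ℂ) * (x : ℂ) / (Complex.I * c)) * f t)
      (∫ t : ℝ, Complex.exp (-(t : ℂ) * (x : ℂ) / (Complex.I * c)) *
        (-((t : ℂ) / (Complex.I * c)) * f t)) x := by
  refine hasDerivAt_integral_of_dominated_loc_of_deriv_le (s := Set.univ)
    (bound := fun t : ℝ => ‖-((t : ℂ) / (Complex.I * c)) * f t‖)
    (F := fun (x : ℝ) (t : ℝ) => Complex.exp (-(t : ℂ) * (x : ℂ) / (Complex.I * c)) * f t)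
    (F' := fun (x : ℝ) (t : ℝ) => Complex.exp (-(t : ℂ) * (x : ℂ) / (Complex.I * c)) *
        (-((t : ℂ) / (Complex.I * c)) * f t)) Filter.univ_mem ?_ ?_ ?_ ?_ h1.norm ?_
  · refine Eventually.of_forall fun y => Continuous.aestronglyMeasurable ?_
    fun_prop
  · refine h0.norm.mono' (Continuous.aestronglyMeasurable (by fun_prop)) ?_
    refine Eventually.of_forall fun t => ?_
    rw [norm_mul, norm_exp, one_mul]
  · exact Continuous.aestronglyMeasurable (by fun_prop)
  · refine Eventually.of_forall fun t y _ => ?_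
    rw [norm_mul, norm_exp, one_mul]
  · refine Eventually.of_forall fun t y _ => ?_
    have h : HasDerivAt (fun y : ℝ => -(t : ℂ) * (y : ℂ) / (Complex.I * c))
        (-(t : ℂ) * 1 / (Complex.I * c)) y :=
      ((Complex.ofRealCLM.hasDerivAt (x := y)).const_mul (-(t:ℂ))).div_const _
    exact (h.cexp.mul_const (f t)).congr_deriv (by ring)

noncomputable def P (c γ : ℝ) (z : ℂ) : ℂ :=
  (c : ℂ) ^ ((2 * z) / (Complex.I * c)) *
    Complex.Gamma (((γ : ℂ) + z) / (Complex.I * c) + 1 / 2) *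
    Complex.Gamma ((-(γ : ℂ) + z) / (Complex.I * c) + 1 / 2)

lemma arg_ne (c γ : ℝ) (hc : 0 < c) (z : ℂ) (h : 0 ≤ z.im) (m : ℕ) :
    (((γ : ℂ) + z) / (Complex.I * c) + 1 / 2) ≠ -m := by
  intro e
  have := congrArg Complex.re e
  rw [div_Ic] at this
  simp at this
  have h0 : 0 ≤ z.im / c := by positivity
  have : (0:ℝ) ≤ m := Nat.cast_nonneg m
  linarith

lemma P_diff (c γ : ℝ) (hc : 0 < c) (z : ℂ) (h : 0 ≤ z.im) : DifferentiableAt ℂ (P c γ) z := by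
  have hc' : (c : ℂ) ≠ 0 := by exact_mod_cast hc.ne'
  have g : ∀ δ : ℝ, DifferentiableAt ℂ
      (fun z => Complex.Gamma (((δ : ℂ) + z) / (Complex.I * c) + 1 / 2)) z := by
    intro δ
    exact DifferentiableAt.comp (f := fun z : ℂ => (((δ : ℂ) + z) / (Complex.I * c) + 1 / 2)) z
      (Complex.differentiableAt_Gamma _ (arg_ne c δ hc z h)) (by fun_prop)
  have g1 := g γ
  have g2 := g (-γ)
  rw [Complex.ofReal_neg] at g2
  have g0 : DifferentiableAt ℂ (fun z : ℂ => (c : ℂ) ^ ((2 * z) / (Complex.I * c))) z :=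
    DifferentiableAt.const_cpow (by fun_prop) (Or.inl hc')
  exact (g0.mul g1).mul g2

lemma P_bound (c γ : ℝ) (hc : 0 < c) : ∃ C : ℝ, 0 ≤ C ∧ ∀ z : ℂ, 0 ≤ z.im → z.im ≤ c →
    ‖P c γ z‖ ≤ C / (1 + z.re^2)^2 := by
  obtain ⟨C1, hC1, h1⟩ := gamma_bound2 c γ hc
  obtain ⟨C2, hC2, h2⟩ := gamma_bound2 c (-γ) hc
  refine ⟨(1 + c^2) * C1 * C2, by positivity, fun z h h' => ?_⟩
  have h0 : 0 ≤ z.im / c := by positivity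
  have h0' : z.im / c ≤ 1 := by rw [div_le_one hc]; exact h'
  have hp : ‖(c : ℂ) ^ ((2 * z) / (Complex.I * c))‖ ≤ 1 + c^2 := by
    rw [Complex.norm_cpow_eq_rpow_re_of_pos hc, div_Ic]
    have e : (2 * z).im / c = 2 * (z.im / c) := by simp; ring
    simp only [e]
    rcases le_total c 1 with h | h
    · have := Real.rpow_le_one hc.le h (z := 2 * (z.im / c)) (by positivity)
      nlinarith [sq_nonneg c]
    · have := Real.rpow_le_rpow_of_exponent_le h (show 2 * (z.im / c) ≤ (2:ℕ) by push_cast; linarith)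
      rw [Real.rpow_natCast] at this
      linarith
  have a1 := h1 z h h'
  have a2 := h2 z h h'
  rw [Complex.ofReal_neg] at a2
  rw [P, norm_mul, norm_mul]
  calc _ ≤ (1 + c^2) * (C1 / (1 + z.re^2)) * (C2 / (1 + z.re^2)) := by gcongr
    _ = _ := by field_simp

lemma P_shift (c γ : ℝ) (hc : 0 < c) (t : ℝ) : P c γ (t + c * Complex.I) =
    c^2 * (((t : ℂ) / (Complex.I * c))^2 + (t : ℂ) / (Complex.I * c) + 1/4 + γ^2/c^2) *
      P c γ t := by
  have hc' : (c : ℂ) ≠ 0 := by exact_mod_cast hc.ne'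
  have hI : Complex.I * c ≠ 0 := mul_ne_zero Complex.I_ne_zero hc'
  have n1 := arg_ne c γ hc t (by simp) 0
  have n2 := arg_ne c (-γ) hc t (by simp) 0
  rw [Complex.ofReal_neg] at n2
  simp only [Nat.cast_zero, neg_zero] at n1 n2
  have e0 : (2 * (t + c * Complex.I)) / (Complex.I * c) = (2 * (t:ℂ)) / (Complex.I * c) + (2:ℕ) := by
    push_cast; field_simp
  have e1 : ∀ δ : ℂ, (δ + (t + c * Complex.I)) / (Complex.I * c) + 1/2 =
      ((δ + t) / (Complex.I * c) + 1/2) + 1 := by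
    intro δ; field_simp; ring
  rw [P, P, e0, e1, e1, Complex.Gamma_add_one _ n1, Complex.Gamma_add_one _ n2,
    Complex.cpow_add _ _ hc', Complex.cpow_natCast]
  have e2 : ((γ + t : ℂ) / (Complex.I * c) + 1/2) * ((-γ + t : ℂ) / (Complex.I * c) + 1/2) =
      ((t : ℂ) / (Complex.I * c))^2 + (t : ℂ) / (Complex.I * c) + 1/4 + γ^2/c^2 := by
    field_simp
    ring_nf
    simp only [Complex.I_sq]
    ring
  rw [← e2]
  ring

lemma P_cont (c γ : ℝ) (hc : 0 < c) : Continuous (fun t : ℝ => P c γ t) := by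
  rw [continuous_iff_continuousAt]
  intro t
  exact ContinuousAt.comp (f := fun t : ℝ => (t : ℂ)) (P_diff c γ hc t (by simp)).continuousAt
    (by fun_prop)

/-- integrability against coefficients of at most quadratic growth -/
lemma P_int (c γ : ℝ) (hc : 0 < c) (q : ℝ → ℂ) (hq : Continuous q) (K : ℝ)
    (hK : ∀ t, ‖q t‖ ≤ K * (1 + t^2)) : Integrable (fun t : ℝ => q t * P c γ t) := by
  obtain ⟨C, hC, h⟩ := P_bound c γ hc
  have hc2 := P_cont c γ hc
  refine Integrable.mono' (integrable_inv_one_add_sq.const_mul (K * C))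
    (Continuous.aestronglyMeasurable (by fun_prop)) (Eventually.of_forall fun t => ?_)
  have := h t (by simp) (by simpa using hc.le)
  rw [Complex.ofReal_re] at this
  rw [norm_mul]
  have hk : 0 ≤ K * (1 + t^2) := (norm_nonneg _).trans (hK t)
  calc _ ≤ (K * (1 + t^2)) * (C / (1 + t^2)^2) := by gcongr; exact hK t
    _ = _ := by field_simp

lemma int_comb (f g h : ℝ → ℂ) (k : ℂ) (hf : Integrable f) (hg : Integrable g)
    (hh : Integrable h) :
    ∫ t, (f t - g t + k * h t) = (∫ t, f t) - (∫ t, g t) + k * ∫ t, h t := by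
  have e := integral_add (hf.sub hg) (hh.const_mul k)
  simp only [Pi.sub_apply] at e
  rw [e, integral_sub hf hg, integral_const_mul]

end B1Toda

open B1Toda


/-- The `n = 1` Mellin-Barnes wave function
`Ψ_γ(x) = ∫_ℝ c^{2γ'/(ic)} e^{-γ'x/(ic)} Γ((γ+γ')/(ic)+1/2) Γ((-γ+γ')/(ic)+1/2) dγ'`
satisfies the one-particle `B₁` Toda equation
`(-d²/dx² + d/dx + (1/c²)eˣ)Ψ_γ = (γ²/c² + 1/4)Ψ_γ`. -/
theorem b1_toda_wave_function (c γ : ℝ) (hc : 0 < c) (Ψ : ℝ → ℂ)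
    (hΨ : Ψ = fun x : ℝ => ∫ t : ℝ,
      (c : ℂ) ^ ((2 * (t : ℂ)) / (Complex.I * c)) *
        Complex.exp (-(t : ℂ) * (x : ℂ) / (Complex.I * c)) *
        Complex.Gamma (((γ : ℂ) + (t : ℂ)) / (Complex.I * c) + 1 / 2) *
        Complex.Gamma ((-(γ : ℂ) + (t : ℂ)) / (Complex.I * c) + 1 / 2)) :
    ∀ x : ℝ,
      -(deriv (deriv Ψ) x) + deriv Ψ x + (1 / (c : ℂ) ^ 2) * Complex.exp (x : ℂ) * Ψ x =
        ((γ : ℂ) ^ 2 / (c : ℂ) ^ 2 + 1 / 4) * Ψ x := by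
  intro x
  have hc' : (c : ℂ) ≠ 0 := by exact_mod_cast hc.ne'
  have hI : Complex.I * c ≠ 0 := mul_ne_zero Complex.I_ne_zero hc'
  have hΨ' : Ψ = fun x : ℝ => ∫ t : ℝ,
      Complex.exp (-(t : ℂ) * (x : ℂ) / (Complex.I * c)) * P c γ t := by
    rw [hΨ]
    funext x
    congr 1
    funext t
    rw [P]
    ring
  have hs : ∀ t : ℝ, ‖(t : ℂ) / (Complex.I * c)‖ = |t| / c := by
    intro t
    simp [abs_of_pos hc]
  have i0 : Integrable (fun t : ℝ => P c γ t) := by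
    have := P_int c γ hc (fun _ => 1) continuous_const 1 (by intro t; simp; positivity)
    simpa using this
  have i1 : Integrable (fun t : ℝ => -((t : ℂ) / (Complex.I * c)) * P c γ t) := by
    refine P_int c γ hc _ (by fun_prop) (1 / c) ?_
    intro t
    rw [norm_neg, hs, div_eq_mul_one_div, mul_comm]
    gcongr
    nlinarith [sq_abs t, sq_nonneg (|t| - 1)]
  have i2 : Integrable (fun t : ℝ => -((t : ℂ) / (Complex.I * c)) *
      (-((t : ℂ) / (Complex.I * c)) * P c γ t)) := by
    have := P_int c γ hc (fun t : ℝ => -((t : ℂ) / (Complex.I * c)) *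
      -((t : ℂ) / (Complex.I * c))) (by fun_prop) (1 / c^2) (by
        intro t
        rw [norm_mul, norm_neg, hs]
        have : |t| / c * (|t| / c) = 1 / c^2 * t^2 := by
          rw [← sq_abs t]; field_simp
        rw [this]
        gcongr
        linarith)
    simpa only [mul_assoc] using this
  have cP := P_cont c γ hc
  have d1 := fun x => (deriv_int c _ cP i0 i1 x).2
  have d2 := fun x => (deriv_int c _ (by fun_prop) i1 i2 x).2
  have j1 := (deriv_int c _ cP i0 i1 x).1
  have j2 := (deriv_int c _ (by fun_prop) i1 i2 x).1
  have j0 : Integrable (fun t : ℝ => Complex.exp (-(t : ℂ) * (x : ℂ) / (Complex.I * c)) *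
      P c γ t) := by
    refine i0.norm.mono' (Continuous.aestronglyMeasurable (by fun_prop)) ?_
    refine Filter.Eventually.of_forall fun t => ?_
    rw [norm_mul, norm_exp, one_mul]
  have D1 : deriv Ψ = fun x : ℝ => ∫ t : ℝ,
      Complex.exp (-(t : ℂ) * (x : ℂ) / (Complex.I * c)) *
        (-((t : ℂ) / (Complex.I * c)) * P c γ t) := by
    rw [hΨ']
    exact funext fun x => (d1 x).deriv
  rw [D1, (d2 x).deriv]
  beta_reduce
  have hx : Ψ x = ∫ t : ℝ, Complex.exp (-(t : ℂ) * (x : ℂ) / (Complex.I * c)) * P c γ t := by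
    rw [hΨ']
  obtain ⟨C, hC, hb⟩ := P_bound c γ hc
  have hsh := shift (fun z => Complex.exp (-z * (x : ℂ) / (Complex.I * c)) * P c γ z) c
    (Real.exp |x| * C) hc
    (fun z h _ => DifferentiableAt.mul (by fun_prop) (P_diff c γ hc z h)) (by
      intro z h h'
      have h0 : 0 ≤ z.im / c := by positivity
      have h0' : z.im / c ≤ 1 := by rw [div_le_one hc]; exact h'
      have he : ‖Complex.exp (-z * (x : ℂ) / (Complex.I * c))‖ ≤ Real.exp |x| := by
        rw [Complex.norm_exp, div_Ic]
        apply Real.exp_le_exp.mpr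
        have e : (-z * (x : ℂ)).im / c = (z.im / c) * (-x) := by simp; ring
        simp only [e]
        nlinarith [neg_abs_le x, le_abs_self x, abs_nonneg x,
          mul_le_mul_of_nonneg_left (neg_le_abs x) h0]
      rw [norm_mul, mul_div_assoc (Real.exp |x|)]
      refine mul_le_mul he ((hb z h h').trans ?_) (norm_nonneg _) (Real.exp_pos _).le
      gcongr
      nlinarith [sq_nonneg z.re, sq_nonneg (z.re^2)])
  rw [← hx] at hsh
  have hcomb : (∫ t : ℝ, Complex.exp (-((t : ℂ) + c * Complex.I) * (x : ℂ) / (Complex.I * c)) *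
      P c γ (t + c * Complex.I)) = ∫ t : ℝ, Complex.exp (-(x : ℂ)) * c^2 *
      (((Complex.exp (-(t : ℂ) * (x : ℂ) / (Complex.I * c)) * (-((t : ℂ) / (Complex.I * c)) *
      (-((t : ℂ) / (Complex.I * c)) * P c γ t))) -
      (Complex.exp (-(t : ℂ) * (x : ℂ) / (Complex.I * c)) * (-((t : ℂ) / (Complex.I * c)) *
        P c γ t))) + (1/4 + (γ:ℂ)^2/c^2) * 
        (Complex.exp (-(t : ℂ) * (x : ℂ) / (Complex.I * c)) * P c γ t)) := by
    congr 1
    funext t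
    rw [P_shift c γ hc]
    have : -((t : ℂ) + c * Complex.I) * (x : ℂ) / (Complex.I * c) =
      -(x:ℂ) + -(t : ℂ) * (x : ℂ) / (Complex.I * c) := by field_simp; ring
    rw [this, Complex.exp_add]
    ring
  rw [hcomb, integral_const_mul, int_comb _ _ _ _ j2 j1 j0, ← hx] at hsh
  have hE : Complex.exp (x:ℂ) * Complex.exp (-(x:ℂ)) = 1 := by
    rw [← Complex.exp_add]; simp
  set A := ∫ t : ℝ, Complex.exp (-(t : ℂ) * (x : ℂ) / (Complex.I * c)) *
    (-((t : ℂ) / (Complex.I * c)) * (-((t : ℂ) / (Complex.I * c)) * P c γ t))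
  set B := ∫ t : ℝ, Complex.exp (-(t : ℂ) * (x : ℂ) / (Complex.I * c)) *
    (-((t : ℂ) / (Complex.I * c)) * P c γ t)
  have hF : (1 / (c : ℂ) ^ 2) * Complex.exp (x : ℂ) * Ψ x =
      A - B + (1/4 + (γ:ℂ)^2/c^2) * Ψ x := by
    calc _ = (1 / (c : ℂ) ^ 2) * Complex.exp (x : ℂ) * (Complex.exp (-(x : ℂ)) * c^2 *
          (A - B + (1/4 + (γ:ℂ)^2/c^2) * Ψ x)) := by rw [← hsh]
      _ = (1 / (c : ℂ) ^ 2 * c^2) * (Complex.exp (x : ℂ) * Complex.exp (-(x : ℂ))) *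
          (A - B + (1/4 + (γ:ℂ)^2/c^2) * Ψ x) := by ring
      _ = _ := by rw [hE]; field_simp
  rw [hF]
  ring
end

section
/- For complex a with Re(a) > 0, the degenerate rank-one Gustafson integral holds: (1/2π)∫_R [Γ(a_1 + iz)Γ(a_1 − iz)Γ(a_2 + iz)Γ(a_2 − iz)Γ(a_3 + iz)Γ(a_3 − iz)] / [Γ(2iz)Γ(−2iz)] dz = 2·Γ(a_1+a_2)Γ(a_1+a_3)Γ(a_2+a_3), whenever Re(a_j) > 0 for j = 1,2,3. -/
open MeasureTheory

namespace DG
open Complex Filter Topology Set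

lemma gamma_norm_le (s : ℂ) (c : ℝ) (hs : 0 < s.re) (hc : 0 < c) :
    ‖Complex.Gamma s‖ ≤ Real.Gamma s.re / Real.Gamma (s.re + c) * ‖Complex.Gamma (s + c)‖ := by
  have hc' : 0 < (c : ℂ).re := by simpa using hc
  have h1 := Complex.Gamma_mul_Gamma_eq_betaIntegral hs hc'
  have h2 := Complex.Gamma_mul_Gamma_eq_betaIntegral (s := (s.re : ℂ)) (by simpa using hs) hc'
  have hB : ‖Complex.betaIntegral s c‖ ≤ ‖Complex.betaIntegral s.re c‖ := by
    unfold Complex.betaIntegral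
    have hre : (∫ x : ℝ in (0:ℝ)..1, (x : ℂ) ^ ((s.re : ℂ) - 1) * (1 - (x : ℂ)) ^ ((c : ℂ) - 1)) =
        ((∫ x : ℝ in (0:ℝ)..1, x ^ (s.re - 1) * (1 - x) ^ (c - 1) : ℝ) : ℂ) := by
      rw [← intervalIntegral.integral_ofReal]
      refine intervalIntegral.integral_congr fun x hx => ?_
      rw [uIcc_of_le zero_le_one] at hx
      simp only [Complex.ofReal_mul]
      rw [Complex.ofReal_cpow hx.1, Complex.ofReal_cpow (by linarith [hx.2])]
      simp
    rw [hre, Complex.norm_real, Real.norm_eq_abs]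
    refine le_trans ?_ (le_abs_self _)
    refine (intervalIntegral.norm_integral_le_integral_norm zero_le_one).trans (le_of_eq ?_)
    refine intervalIntegral.integral_congr_Ioo_of_le zero_le_one fun x hx => ?_
    have h1x : 0 < 1 - x := by linarith [hx.2]
    have : (1 - (x : ℂ)) = ((1 - x : ℝ) : ℂ) := by simp
    simp only [norm_mul, this, Complex.norm_cpow_eq_rpow_re_of_pos hx.1,
      Complex.norm_cpow_eq_rpow_re_of_pos h1x]
    simp
  rw [← Complex.ofReal_add, Complex.Gamma_ofReal, Complex.Gamma_ofReal, Complex.Gamma_ofReal] at h2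
  rw [Complex.Gamma_ofReal] at h1
  have h1' := congrArg norm h1
  have h2' := congrArg norm h2
  have g1 := Real.Gamma_pos_of_pos hs
  have g2 := Real.Gamma_pos_of_pos hc
  have g3 := Real.Gamma_pos_of_pos (add_pos hs hc)
  simp only [norm_mul, Complex.norm_real, Real.norm_eq_abs, abs_of_pos g1, abs_of_pos g2, abs_of_pos g3] at h1' h2'
  rw [div_mul_eq_mul_div, le_div_iff₀ g3]
  refine le_of_mul_le_mul_right ?_ g2
  calc ‖Complex.Gamma s‖ * Real.Gamma (s.re + c) * Real.Gamma c
      = (‖Complex.Gamma s‖ * Real.Gamma c) * Real.Gamma (s.re + c) := by ring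
    _ = ‖Complex.Gamma (s + c)‖ * (‖Complex.betaIntegral s c‖ * Real.Gamma (s.re + c)) := by rw [h1']; ring
    _ ≤ ‖Complex.Gamma (s + c)‖ * (‖Complex.betaIntegral s.re c‖ * Real.Gamma (s.re + c)) := by gcongr
    _ = ‖Complex.Gamma (s + c)‖ * (Real.Gamma s.re * Real.Gamma c) := by rw [h2']; ring
    _ = _ := by ring

lemma gamma_half (y : ℝ) : ‖Complex.Gamma (1 / 2 + I * y)‖ ^ 2 ≤ 2 * Real.pi * Real.exp (-Real.pi * |y|) := by
  have h := Complex.Gamma_mul_Gamma_one_sub (1 / 2 + I * y)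
  have hconj : (1 - (1 / 2 + I * y) : ℂ) = (starRingEnd ℂ) (1 / 2 + I * y) := by
    apply Complex.ext <;> simp
    norm_num
  rw [hconj, Complex.Gamma_conj, Complex.mul_conj'] at h
  have hs : Complex.sin (Real.pi * (1 / 2 + I * y)) = ((Real.cosh (Real.pi * y) : ℝ) : ℂ) := by
    rw [show (Real.pi * (1 / 2 + I * y) : ℂ) = (Real.pi * y : ℝ) * I + Real.pi / 2 by push_cast; ring,
      Complex.sin_add_pi_div_two, Complex.cos_mul_I, Complex.ofReal_cosh]
  rw [hs] at h
  have h' : ‖Complex.Gamma (1 / 2 + I * y)‖ ^ 2 = Real.pi / Real.cosh (Real.pi * y) := by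
    exact_mod_cast h
  rw [h', div_le_iff₀ (Real.cosh_pos _), Real.cosh_eq]
  have hpi := Real.pi_pos
  have hge : Real.exp (Real.pi * |y|) ≤ Real.exp (Real.pi * y) + Real.exp (-(Real.pi * y)) := by
    rcases abs_choice y with h | h <;> rw [h]
    · linarith [Real.exp_pos (-(Real.pi * y))]
    · rw [mul_neg]; linarith [Real.exp_pos ((Real.pi * y))]
  have : Real.exp (-Real.pi * |y|) * Real.exp (Real.pi * |y|) = 1 := by
    rw [← Real.exp_add]; simp
  have h3 := mul_le_mul_of_nonneg_left hge (Real.exp_pos (-Real.pi * |y|)).le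
  rw [this] at h3
  nlinarith

lemma gamma_half_nat (N : ℕ) (δ : ℝ) (hδ : 0 < δ) : ∃ C : ℝ, 0 < C ∧ ∀ y : ℝ,
    ‖Complex.Gamma (1 / 2 + N + I * y)‖ ≤ C * Real.exp (-(Real.pi / 2 - δ) * |y|) := by
  induction N generalizing δ with
  | zero =>
    have hpi := Real.pi_pos
    refine ⟨Real.sqrt (2 * Real.pi), by positivity, fun y => ?_⟩
    simp only [Nat.cast_zero, add_zero]
    refine (le_abs_self _).trans (abs_le_of_sq_le_sq ?_ (by positivity))
    rw [mul_pow, Real.sq_sqrt (by positivity), ← Real.exp_nat_mul]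
    refine (gamma_half y).trans ?_
    refine mul_le_mul_of_nonneg_left (Real.exp_le_exp.2 ?_) (by positivity)
    push_cast
    nlinarith [abs_nonneg y]
  | succ N ih =>
    obtain ⟨C, hC, h⟩ := ih (δ / 2) (by positivity)
    refine ⟨(1 / 2 + N + 2 / δ) * C, by positivity, fun y => ?_⟩
    have hne : (1 / 2 + N + I * y : ℂ) ≠ 0 := by
      intro h0
      have := congrArg Complex.re h0
      simp at this
      have h2 : (0 : ℝ) ≤ N := Nat.cast_nonneg N
      linarith
    have e : (1 / 2 + ((N + 1 : ℕ) : ℂ) + I * y : ℂ) = (1 / 2 + N + I * y) + 1 := by push_cast; ring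
    rw [e, Complex.Gamma_add_one _ hne, norm_mul]
    have hn : ‖(1 / 2 + N + I * y : ℂ)‖ ≤ (1 / 2 + N + 2 / δ) * Real.exp (δ / 2 * |y|) := by
      have h1 : ‖(1 / 2 + N + I * y : ℂ)‖ ≤ 1 / 2 + N + |y| := by
        refine (norm_add_le _ _).trans ?_
        have : (1 / 2 + N : ℂ) = ((1 / 2 + N : ℝ) : ℂ) := by push_cast; ring
        rw [this, Complex.norm_real, norm_mul, Complex.norm_I, Complex.norm_real, Real.norm_eq_abs,
          Real.norm_eq_abs, abs_of_pos (by positivity)]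
        simp
      have h2 : |y| ≤ 2 / δ * Real.exp (δ / 2 * |y|) := by
        have := Real.add_one_le_exp (δ / 2 * |y|)
        calc |y| = 2 / δ * (δ / 2 * |y|) := by field_simp
          _ ≤ _ := by gcongr; linarith
      have h3 : 1 ≤ Real.exp (δ / 2 * |y|) := Real.one_le_exp (by positivity)
      have h4 : (0 : ℝ) ≤ N := Nat.cast_nonneg N
      nlinarith
    calc _ ≤ ((1 / 2 + N + 2 / δ) * Real.exp (δ / 2 * |y|)) * (C * Real.exp (-(Real.pi / 2 - δ / 2) * |y|)) :=
          mul_le_mul hn (h y) (norm_nonneg _) (by positivity)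
      _ = (1 / 2 + N + 2 / δ) * C * (Real.exp (δ / 2 * |y|) * Real.exp (-(Real.pi / 2 - δ / 2) * |y|)) := by ring
      _ = _ := by rw [← Real.exp_add]; congr 2; ring

lemma gamma_bound (α β : ℝ) (hα : 0 < α) : ∃ C : ℝ, 0 < C ∧ ∀ s : ℂ, α ≤ s.re → s.re ≤ β →
    ‖Complex.Gamma s‖ ≤ C * Real.exp (-(2 * Real.pi / 5) * |s.im|) := by
  have hpi := Real.pi_pos
  have hcont : ContinuousOn (fun x : ℝ => Real.Gamma x)
      (Icc α β) := by
    intro x hx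
    have hx0 : 0 < x := lt_of_lt_of_le hα hx.1
    apply ContinuousAt.continuousWithinAt
    refine (Real.differentiableAt_Gamma fun m => ?_).continuousAt
    have : (0 : ℝ) ≤ m := Nat.cast_nonneg m
    linarith
  obtain ⟨C, hC⟩ := isCompact_Icc.exists_bound_of_continuousOn hcont
  obtain ⟨N, hN⟩ := exists_nat_gt β
  obtain ⟨D, hD, h⟩ := gamma_half_nat N (Real.pi / 10) (by positivity)
  have hg : 0 < Real.Gamma (1 / 2 + N) := Real.Gamma_pos_of_pos (by positivity)
  refine ⟨max C 1 / Real.Gamma (1 / 2 + N) * D, by positivity, fun s h1 h2 => ?_⟩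
  have hs : 0 < s.re := lt_of_lt_of_le hα h1
  have key := gamma_norm_le s (1 / 2 + N - s.re) hs (by linarith)
  have e : s + ((1 / 2 + N - s.re : ℝ) : ℂ) = 1 / 2 + N + I * s.im := by
    apply Complex.ext <;> simp
  rw [e, add_sub_cancel] at key
  refine key.trans ?_
  have h3 := (le_abs_self _).trans (hC s.re ⟨h1, h2⟩)
  have h4 := h s.im
  rw [show Real.pi / 2 - Real.pi / 10 = 2 * Real.pi / 5 by ring] at h4
  rw [mul_assoc]
  have := h3.trans (le_max_left C 1)
  gcongr

lemma pair_bound (α β : ℝ) (hα : 0 < α) : ∃ C : ℝ, 0 < C ∧ ∀ u v : ℂ, α ≤ u.re → u.re ≤ β →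
    α ≤ v.re → v.re ≤ β →
    ‖Complex.Gamma u * Complex.Gamma v‖ ≤ C * Real.exp (-(2 * Real.pi / 5) * |u.im - v.im|) := by
  obtain ⟨C, hC, h⟩ := gamma_bound α β hα
  refine ⟨C * C, by positivity, fun u v h1 h2 h3 h4 => ?_⟩
  rw [norm_mul]
  have hpi := Real.pi_pos
  calc _ ≤ (C * Real.exp (-(2 * Real.pi / 5) * |u.im|)) * (C * Real.exp (-(2 * Real.pi / 5) * |v.im|)) :=
        mul_le_mul (h u h1 h2) (h v h3 h4) (norm_nonneg _) (by positivity)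
    _ = C * C * Real.exp (-(2 * Real.pi / 5) * (|u.im| + |v.im|)) := by
        rw [mul_add, Real.exp_add]; ring
    _ ≤ _ := by
        have := abs_sub u.im v.im
        refine mul_le_mul_of_nonneg_left (Real.exp_le_exp.2 ?_) (by positivity)
        nlinarith

lemma integrable_exp_abs {κ : ℝ} (hκ : 0 < κ) : Integrable (fun t : ℝ => Real.exp (-κ * |t|)) := by
  have := (integrable_fun_norm_addHaar (E := ℝ) volume (f := fun t : ℝ => Real.exp (-κ * t))).2
  simpa using this (by simpa using (integrableOn_exp_mul_Ioi (a := -κ) (by linarith) 0))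

/-- shifting a contour across a vertical strip -/
lemma strip_shift (f : ℂ → ℂ) (hf : ∀ s : ℂ, |s.re| ≤ 1 / 2 → DifferentiableAt ℂ f s) (C κ : ℝ)
    (hκ : 0 < κ) (hb : ∀ s : ℂ, |s.re| ≤ 1 / 2 → ‖f s‖ ≤ C * Real.exp (-κ * |s.im|)) :
    ∫ t : ℝ, (f (1 / 2 + I * t) - f (-1 / 2 + I * t)) = 0 := by
  have h_integ : ∀ c : ℝ, |c| ≤ 1 / 2 → Integrable (fun t : ℝ => f (c + I * t)) := by
    intro c hc
    refine ((integrable_exp_abs hκ).const_mul C).mono' ?_ (Eventually.of_forall fun t => ?_)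
    · refine Continuous.aestronglyMeasurable ?_
      rw [continuous_iff_continuousAt]
      intro t
      refine ContinuousAt.comp (g := f) (f := fun t : ℝ => (c + I * t : ℂ)) ?_ (by fun_prop)
      exact (hf _ (by simpa using hc)).continuousAt
    · simpa using hb (c + I * t) (by simpa using hc)
  have hi1 := h_integ (1 / 2) (by norm_num [abs_of_pos])
  have hi2 := h_integ (-1 / 2) (by norm_num [abs_of_neg])
  have hi1' : Integrable (fun t : ℝ => f (1 / 2 + I * t)) := by simpa using hi1
  have hi2' : Integrable (fun t : ℝ => f (-1 / 2 + I * t)) := by simpa using hi2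
  have l1 := intervalIntegral_tendsto_integral hi1' tendsto_neg_atTop_atBot tendsto_id
  have l2 := intervalIntegral_tendsto_integral hi2' tendsto_neg_atTop_atBot tendsto_id
  have hz : Tendsto (fun T : ℝ => C * Real.exp (-κ * |T|)) atTop (𝓝 0) := by
    rw [show (0 : ℝ) = C * 0 by simp]
    refine Tendsto.const_mul C (Real.tendsto_exp_atBot.comp ?_)
    exact (tendsto_abs_atTop_atTop).const_mul_atTop_of_neg (by linarith)
  have hd : Tendsto (fun T : ℝ => (∫ t in (-T)..T, f (1 / 2 + I * t)) - ∫ t in (-T)..T, f (-1 / 2 + I * t))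
      atTop (𝓝 0) := by
    refine squeeze_zero_norm (a := fun T => 2 * (C * Real.exp (-κ * |T|))) (fun T => ?_) (by simpa using hz.const_mul 2)
    have hr := Complex.integral_boundary_rect_eq_zero_of_differentiableOn f (-1 / 2 - T * I) (1 / 2 + T * I) (by
      intro s hs
      refine (hf s ?_).differentiableWithinAt
      have := hs.1
      simp at this
      norm_num [uIcc_of_le] at this
      exact abs_le.2 ⟨by linarith [this.1], this.2⟩)
    simp at hr
    have hb1 : ‖∫ x : ℝ in (-1 / 2)..(1 / 2), f (x + (-(T * I)))‖ ≤ C * Real.exp (-κ * |T|) := by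
      have := intervalIntegral.norm_integral_le_of_norm_le_const (a := (-1 / 2 : ℝ)) (b := 1 / 2)
        (f := fun x : ℝ => f (x + (-(T * I)))) (C := C * Real.exp (-κ * |T|)) (by
        intro x hx
        rw [uIoc_of_le (by norm_num)] at hx
        simpa using hb (x + (-(T * I))) (by simpa using abs_le.2 ⟨by linarith [hx.1], hx.2⟩))
      norm_num at this ⊢
      exact this
    have hb2 : ‖∫ x : ℝ in (-1 / 2)..(1 / 2), f (x + T * I)‖ ≤ C * Real.exp (-κ * |T|) := by
      have := intervalIntegral.norm_integral_le_of_norm_le_const (a := (-1 / 2 : ℝ)) (b := 1 / 2)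
        (f := fun x : ℝ => f (x + T * I)) (C := C * Real.exp (-κ * |T|)) (by
        intro x hx
        rw [uIoc_of_le (by norm_num)] at hx
        simpa using hb (x + (T * I)) (by simpa using abs_le.2 ⟨by linarith [hx.1], hx.2⟩))
      norm_num at this ⊢
      exact this
    have e1 : (∫ t in (-T)..T, f (1 / 2 + I * t)) = ∫ y : ℝ in (-T)..T, f (2⁻¹ + y * I) := by
      refine intervalIntegral.integral_congr fun y _ => ?_
      simp [mul_comm]
    have e2 : (∫ t in (-T)..T, f (-1 / 2 + I * t)) = ∫ y : ℝ in (-T)..T, f (-1 / 2 + y * I) := by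
      refine intervalIntegral.integral_congr fun y _ => ?_
      simp [mul_comm]
    rw [e1, e2]
    rw [one_div] at hb1 hb2
    have e3 : I * ((∫ y : ℝ in (-T)..T, f (2⁻¹ + y * I)) - ∫ y : ℝ in (-T)..T, f (-1 / 2 + y * I)) =
      (∫ (x : ℝ) in (-1 / 2)..2⁻¹, f (↑x + ↑T * I)) - ∫ (x : ℝ) in (-1 / 2)..2⁻¹, f (↑x + -(↑T * I)) := by
      linear_combination hr
    have e4 := congrArg norm e3
    rw [norm_mul, Complex.norm_I, one_mul] at e4
    rw [e4]
    refine (norm_sub_le _ _).trans ?_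
    linarith
  have := tendsto_nhds_unique (l1.sub l2) hd
  rw [integral_sub hi1' hi2']
  exact this
/-- The product of six Gamma values. -/
noncomputable def pr (a b c s : ℂ) : ℂ :=
  Complex.Gamma (a + s) * Complex.Gamma (a - s) * (Complex.Gamma (b + s) * Complex.Gamma (b - s)) *
    (Complex.Gamma (c + s) * Complex.Gamma (c - s))

/-- The regularised integrand. -/
noncomputable def W (a b c : ℂ) (z : ℝ) : ℂ :=
  pr a b c (I * z) * (z * Complex.sinh (2 * Real.pi * z))

/-- The regularised integral. -/
noncomputable def II (a b c : ℂ) : ℂ := ∫ z : ℝ, W a b c z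

lemma gamma_diff {s : ℂ} (hs : 0 < s.re) : DifferentiableAt ℂ Complex.Gamma s := by
  refine Complex.differentiableAt_Gamma s fun m hm => ?_
  have := congrArg Complex.re hm
  simp at this
  have h2 : (0 : ℝ) ≤ m := Nat.cast_nonneg m
  linarith

lemma W_bound (α β : ℝ) (hα : 0 < α) (b c : ℂ) (hb : 0 < b.re) (hc : 0 < c.re) :
    ∃ C : ℝ, 0 < C ∧ ∀ a : ℂ, α ≤ a.re → a.re ≤ β → ∀ z : ℝ,
      ‖W a b c z‖ ≤ C * Real.exp (-(Real.pi / 5) * |z|) := by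
  have hpi := Real.pi_pos
  obtain ⟨C1, hC1, h1⟩ := pair_bound α β hα
  obtain ⟨C2, hC2, h2⟩ := pair_bound b.re b.re hb
  obtain ⟨C3, hC3, h3⟩ := pair_bound c.re c.re hc
  refine ⟨C1 * C2 * C3 * (5 / Real.pi), by positivity, fun a ha1 ha2 z => ?_⟩
  have g1 := h1 (a + I * z) (a - I * z) (by simpa) (by simpa) (by simpa) (by simpa)
  have g2 := h2 (b + I * z) (b - I * z) (by simp) (by simp) (by simp) (by simp)
  have g3 := h3 (c + I * z) (c - I * z) (by simp) (by simp) (by simp) (by simp)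
  have him : ∀ a : ℂ, |(a + I * z).im - (a - I * z).im| = 2 * |z| := by
    intro a
    have : (a + I * z).im - (a - I * z).im = 2 * z := by simp; ring
    rw [this, abs_mul, abs_two]
  rw [him] at g1 g2 g3
  have hz : |z| ≤ 5 / Real.pi * Real.exp (Real.pi / 5 * |z|) := by
    have := Real.add_one_le_exp (Real.pi / 5 * |z|)
    calc |z| = 5 / Real.pi * (Real.pi / 5 * |z|) := by field_simp
      _ ≤ _ := by gcongr; linarith
  have hsinh : ‖Complex.sinh (2 * Real.pi * z)‖ ≤ Real.exp (2 * Real.pi * |z|) := by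
    rw [show (2 * Real.pi * z : ℂ) = ((2 * Real.pi * z : ℝ) : ℂ) by push_cast; ring, ← Complex.ofReal_sinh,
      Complex.norm_real, Real.norm_eq_abs, Real.abs_sinh, abs_mul, abs_of_pos (by positivity : 0 < 2 * Real.pi),
      Real.sinh_eq]
    linarith [Real.exp_pos (2 * Real.pi * |z|), Real.exp_pos (-(2 * Real.pi * |z|))]
  unfold W pr
  rw [norm_mul, norm_mul, norm_mul, norm_mul (z : ℂ), Complex.norm_real, Real.norm_eq_abs]
  calc _ ≤ (C1 * Real.exp (-(2 * Real.pi / 5) * (2 * |z|))) * (C2 * Real.exp (-(2 * Real.pi / 5) * (2 * |z|)))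
          * (C3 * Real.exp (-(2 * Real.pi / 5) * (2 * |z|))) *
          ((5 / Real.pi * Real.exp (Real.pi / 5 * |z|)) * Real.exp (2 * Real.pi * |z|)) := by gcongr
    _ = C1 * C2 * C3 * (5 / Real.pi) * (Real.exp (-(2 * Real.pi / 5) * (2 * |z|)) * Real.exp (-(2 * Real.pi / 5) * (2 * |z|))
        * Real.exp (-(2 * Real.pi / 5) * (2 * |z|)) * Real.exp (Real.pi / 5 * |z|) * Real.exp (2 * Real.pi * |z|)) := by ring
    _ = _ := by
      simp only [← Real.exp_add]
      congr 2
      ring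

lemma W_cont (a b c : ℂ) (ha : 0 < a.re) (hb : 0 < b.re) (hc : 0 < c.re) : Continuous (W a b c) := by
  have hp : ∀ d : ℂ, 0 < d.re → Continuous (fun z : ℝ => Complex.Gamma (d + I * z)) ∧
      Continuous (fun z : ℝ => Complex.Gamma (d - I * z)) := by
    intro d hd
    constructor
    · rw [continuous_iff_continuousAt]
      intro t
      refine ContinuousAt.comp (g := Complex.Gamma) (f := fun t : ℝ => (d + I * t : ℂ)) ?_ (by fun_prop)
      exact (gamma_diff (by simpa using hd)).continuousAt
    · rw [continuous_iff_continuousAt]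
      intro t
      refine ContinuousAt.comp (g := Complex.Gamma) (f := fun t : ℝ => (d - I * t : ℂ)) ?_ (by fun_prop)
      exact (gamma_diff (by simpa using hd)).continuousAt
  have h1 := hp a ha
  have h2 := hp b hb
  have h3 := hp c hc
  unfold W pr
  have h4 : Continuous (fun z : ℝ => (z : ℂ) * Complex.sinh (2 * Real.pi * z)) := by
    have := Complex.continuous_sinh
    fun_prop
  exact (((h1.1.mul h1.2).mul (h2.1.mul h2.2)).mul (h3.1.mul h3.2)).mul h4

lemma W_int (a b c : ℂ) (ha : 0 < a.re) (hb : 0 < b.re) (hc : 0 < c.re) : Integrable (W a b c) := by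
  obtain ⟨C, hC, h⟩ := W_bound a.re a.re ha b c hb hc
  exact ((integrable_exp_abs (by positivity)).const_mul C).mono' (W_cont a b c ha hb hc).aestronglyMeasurable
    (Eventually.of_forall (h a le_rfl le_rfl))

lemma W_add_one (a b c : ℂ) (ha : 0 < a.re) (z : ℝ) : W (a + 1) b c z = (a ^ 2 + z ^ 2) * W a b c z := by
  have n1 : a + I * z ≠ 0 := by
    intro h0
    have := congrArg Complex.re h0
    simp at this; linarith
  have n2 : a - I * z ≠ 0 := by
    intro h0
    have := congrArg Complex.re h0
    simp at this; linarith
  unfold W pr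
  rw [show a + 1 + I * z = (a + I * z) + 1 by ring, show a + 1 - I * z = (a - I * z) + 1 by ring,
    Complex.Gamma_add_one _ n1, Complex.Gamma_add_one _ n2]
  have : (a + I * z) * (a - I * z) = a ^ 2 + (z : ℂ) ^ 2 := by
    linear_combination (-(z : ℂ) ^ 2) * Complex.I_sq
  rw [← this]
  ring

lemma II_rec (a b c : ℂ) (ha : 0 < a.re) (hb : 0 < b.re) (hc : 0 < c.re) :
    II (a + 1) b c = (a + b) * (a + c) * II a b c := by
  have hpi := Real.pi_pos
  set f : ℂ → ℂ := fun s => pr (a + 1 / 2) (b + 1 / 2) (c + 1 / 2) s * Complex.sin (2 * Real.pi * s) with hf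
  have hre : ∀ d s : ℂ, 0 < d.re → |s.re| ≤ 1 / 2 → d.re ≤ (d + 1 / 2 + s).re ∧ (d + 1 / 2 + s).re ≤ d.re + 1 ∧
      d.re ≤ (d + 1 / 2 - s).re ∧ (d + 1 / 2 - s).re ≤ d.re + 1 := by
    intro d s hd hs
    have := abs_le.1 hs
    simp
    refine ⟨?_, ?_, ?_, ?_⟩ <;> linarith [this.1, this.2]
  have hdiff : ∀ s : ℂ, |s.re| ≤ 1 / 2 → DifferentiableAt ℂ f s := by
    intro s hs
    have hd : ∀ d : ℂ, 0 < d.re → DifferentiableAt ℂ (fun s => Complex.Gamma (d + 1 / 2 + s)) s ∧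
        DifferentiableAt ℂ (fun s => Complex.Gamma (d + 1 / 2 - s)) s := by
      intro d hd
      obtain ⟨r1, -, r2, -⟩ := hre d s hd hs
      constructor
      · exact DifferentiableAt.comp (g := Complex.Gamma) (f := fun s => d + 1 / 2 + s) s (gamma_diff (by linarith)) (by fun_prop)
      · exact DifferentiableAt.comp (g := Complex.Gamma) (f := fun s => d + 1 / 2 - s) s (gamma_diff (by linarith)) (by fun_prop)
    have h1 := hd a ha
    have h2 := hd b hb
    have h3 := hd c hc
    have h4 : DifferentiableAt ℂ (fun s : ℂ => Complex.sin (2 * Real.pi * s)) s := by fun_prop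
    exact (((h1.1.mul h1.2).mul (h2.1.mul h2.2)).mul (h3.1.mul h3.2)).mul h4
  obtain ⟨C1, hC1, h1⟩ := pair_bound a.re (a.re + 1) ha
  obtain ⟨C2, hC2, h2⟩ := pair_bound b.re (b.re + 1) hb
  obtain ⟨C3, hC3, h3⟩ := pair_bound c.re (c.re + 1) hc
  have hbd : ∀ s : ℂ, |s.re| ≤ 1 / 2 → ‖f s‖ ≤ C1 * C2 * C3 * Real.exp (-(2 * Real.pi / 5) * |s.im|) := by
    intro s hs
    obtain ⟨p1, p2, p3, p4⟩ := hre a s ha hs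
    obtain ⟨q1, q2, q3, q4⟩ := hre b s hb hs
    obtain ⟨r1, r2, r3, r4⟩ := hre c s hc hs
    have g1 := h1 _ _ p1 p2 p3 p4
    have g2 := h2 _ _ q1 q2 q3 q4
    have g3 := h3 _ _ r1 r2 r3 r4
    have him : ∀ a : ℂ, |(a + s).im - (a - s).im| = 2 * |s.im| := by
      intro a
      have : (a + s).im - (a - s).im = 2 * s.im := by simp; ring
      rw [this, abs_mul, abs_two]
    rw [him] at g1 g2 g3
    have hsin : ‖Complex.sin (2 * Real.pi * s)‖ ≤ Real.exp (2 * Real.pi * |s.im|) := by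
      have e1 : ‖Complex.exp (-(2 * Real.pi * s) * I)‖ ≤ Real.exp (2 * Real.pi * |s.im|) := by
        rw [Complex.norm_exp]
        refine Real.exp_le_exp.2 ?_
        simp
        gcongr
        exact le_abs_self _
      have e2 : ‖Complex.exp ((2 * Real.pi * s) * I)‖ ≤ Real.exp (2 * Real.pi * |s.im|) := by
        rw [Complex.norm_exp]
        refine Real.exp_le_exp.2 ?_
        simp
        rw [← mul_neg]
        gcongr
        exact neg_le_abs _
      unfold Complex.sin
      rw [norm_div, norm_mul, Complex.norm_I, mul_one, Complex.norm_two]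
      have := norm_sub_le (Complex.exp (-(2 * Real.pi * s) * I)) (Complex.exp ((2 * Real.pi * s) * I))
      linarith
    simp only [hf, pr]
    rw [norm_mul, norm_mul, norm_mul]
    calc _ ≤ (C1 * Real.exp (-(2 * Real.pi / 5) * (2 * |s.im|))) * (C2 * Real.exp (-(2 * Real.pi / 5) * (2 * |s.im|)))
          * (C3 * Real.exp (-(2 * Real.pi / 5) * (2 * |s.im|))) * Real.exp (2 * Real.pi * |s.im|) := by gcongr
      _ = C1 * C2 * C3 * (Real.exp (-(2 * Real.pi / 5) * (2 * |s.im|)) * Real.exp (-(2 * Real.pi / 5) * (2 * |s.im|))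
        * Real.exp (-(2 * Real.pi / 5) * (2 * |s.im|)) * Real.exp (2 * Real.pi * |s.im|)) := by ring
      _ = _ := by
        simp only [← Real.exp_add]
        congr 2
        ring
  have key := strip_shift f hdiff _ _ (by positivity) hbd
  have hne : ∀ d : ℂ, 0 < d.re → ∀ z : ℝ, Complex.Gamma (d + 1 / 2 + (1 / 2 + I * z)) = (d + I * z) * Complex.Gamma (d + I * z) ∧
      Complex.Gamma (d + 1 / 2 - (-1 / 2 + I * z)) = (d - I * z) * Complex.Gamma (d - I * z) := by
    intro d hd z
    have n1 : d + I * z ≠ 0 := by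
      intro h0
      have := congrArg Complex.re h0
      simp at this; linarith
    have n2 : d - I * z ≠ 0 := by
      intro h0
      have := congrArg Complex.re h0
      simp at this; linarith
    constructor
    · rw [← Complex.Gamma_add_one _ n1]; congr 1; ring
    · rw [← Complex.Gamma_add_one _ n2]; congr 1; ring
  have hpt : ∀ z : ℝ, f (1 / 2 + I * z) - f (-1 / 2 + I * z) =
      2 * ((a + b) * (a + c)) * W a b c z - 2 * W (a + 1) b c z := by
    intro z
    rw [W_add_one a b c ha]
    simp only [hf, pr, W]
    rw [(hne a ha z).1, (hne a ha z).2, (hne b hb z).1, (hne b hb z).2, (hne c hc z).1, (hne c hc z).2]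
    have s1 : ∀ d : ℂ, d + 1 / 2 - (1 / 2 + I * z) = d - I * z := fun d => by ring
    have s2 : ∀ d : ℂ, d + 1 / 2 + (-1 / 2 + I * z) = d + I * z := fun d => by ring
    simp only [s1, s2]
    have t1 : Complex.sin (2 * Real.pi * (1 / 2 + I * z)) = - (Complex.sinh (2 * Real.pi * z) * I) := by
      rw [show (2 * Real.pi * (1 / 2 + I * z) : ℂ) = (2 * Real.pi * z) * I + Real.pi by ring,
        Complex.sin_add_pi, Complex.sin_mul_I]
    have t2 : Complex.sin (2 * Real.pi * (-1 / 2 + I * z)) = - (Complex.sinh (2 * Real.pi * z) * I) := by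
      rw [show (2 * Real.pi * (-1 / 2 + I * z) : ℂ) = (2 * Real.pi * z) * I - Real.pi by ring,
        Complex.sin_sub_pi, Complex.sin_mul_I]
    rw [t1, t2]
    generalize Complex.sinh (2 * Real.pi * z) = S
    generalize Complex.Gamma (a + I * z) = A1
    generalize Complex.Gamma (a - I * z) = A2
    generalize Complex.Gamma (b + I * z) = B1
    generalize Complex.Gamma (b - I * z) = B2
    generalize Complex.Gamma (c + I * z) = D1
    generalize Complex.Gamma (c - I * z) = D2
    have i3 : I ^ 3 = -I := by rw [pow_succ, Complex.I_sq]; ring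
    have i4 : I ^ 4 = 1 := Complex.I_pow_four
    ring_nf
    simp only [Complex.I_sq, i4]
    ring
  simp_rw [hpt] at key
  rw [integral_sub ((W_int a b c ha hb hc).const_mul _) ((W_int (a + 1) b c (by simp; linarith) hb hc).const_mul _),
    integral_const_mul, integral_const_mul] at key
  unfold II
  linear_combination (-1 / 2 : ℂ) * key

lemma II_diff (a b c : ℂ) (ha : 0 < a.re) (hb : 0 < b.re) (hc : 0 < c.re) :
    DifferentiableAt ℂ (fun a => II a b c) a := by
  set r : ℝ := a.re / 4 with hr
  have hr0 : 0 < r := by positivity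
  obtain ⟨C, hC, hW⟩ := W_bound (a.re - 2 * r) (a.re + 2 * r) (by rw [hr]; linarith) b c hb hc
  set K : ℝ → ℂ := fun z => (Complex.Gamma (b + I * z) * Complex.Gamma (b - I * z)) *
    (Complex.Gamma (c + I * z) * Complex.Gamma (c - I * z)) * (z * Complex.sinh (2 * Real.pi * z)) with hK
  have hWK : ∀ x z, W x b c z = Complex.Gamma (x + I * z) * Complex.Gamma (x - I * z) * K z := by
    intro x z; simp only [W, pr, hK]; ring
  set F' : ℂ → ℝ → ℂ := fun x z => deriv (fun x => W x b c z) x with hF'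
  have hderiv : ∀ z : ℝ, ∀ x : ℂ, 0 < x.re → DifferentiableAt ℂ (fun x => W x b c z) x := by
    intro z x hx
    simp only [hWK]
    have d1 : DifferentiableAt ℂ (fun x => Complex.Gamma (x + I * z)) x :=
      DifferentiableAt.comp (g := Complex.Gamma) (f := fun x => x + I * z) x (gamma_diff (by simpa using hx)) (by fun_prop)
    have d2 : DifferentiableAt ℂ (fun x => Complex.Gamma (x - I * z)) x :=
      DifferentiableAt.comp (g := Complex.Gamma) (f := fun x => x - I * z) x (gamma_diff (by simpa using hx)) (by fun_prop)
    exact (d1.mul d2).mul_const _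
  have hball : ∀ x : ℂ, ∀ ρ : ℝ, ‖x - a‖ ≤ ρ → a.re - ρ ≤ x.re ∧ x.re ≤ a.re + ρ := by
    intro x ρ h
    have := abs_le.1 ((Complex.abs_re_le_norm (x - a)).trans h)
    simp at this
    constructor <;> linarith [this.1, this.2]
  have main := hasDerivAt_integral_of_dominated_loc_of_deriv_le (μ := volume) (𝕜 := ℂ)
    (F := fun x z => W x b c z) (x₀ := a) (s := Metric.ball a r) (F' := F')
    (bound := fun z => C * Real.exp (-(Real.pi / 5) * |z|) / r)
    (Metric.ball_mem_nhds a hr0) ?_ (W_int a b c ha hb hc) ?_ ?_ ?_ ?_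
  · exact main.2.differentiableAt
  · filter_upwards [Metric.ball_mem_nhds a hr0] with x hx
    have := hball x r (by simpa [dist_eq_norm] using (Metric.mem_ball.1 hx).le)
    exact (W_cont x b c (by linarith [this.1]) hb hc).aestronglyMeasurable
  · -- measurability of the derivative as a limit of slopes
    have hu : Tendsto (fun n : ℕ => (r / (n + 1) : ℝ)) atTop (𝓝 0) := by
      have := (tendsto_one_div_add_atTop_nhds_zero_nat (𝕜 := ℝ)).const_mul r
      simpa [div_eq_mul_inv] using this
    have hun : ∀ n : ℕ, (r / (n + 1) : ℝ) ≠ 0 := fun n => by positivity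
    refine aestronglyMeasurable_of_tendsto_ae (u := atTop)
      (f := fun (n : ℕ) z => (((r / (n + 1) : ℝ) : ℂ))⁻¹ * (W (a + ((r / (n + 1) : ℝ) : ℂ)) b c z - W a b c z)) ?_ ?_
    · intro n
      have hp : 0 < r / ((n : ℝ) + 1) := by positivity
      refine (((W_cont _ b c ?_ hb hc).sub (W_cont a b c ha hb hc)).const_smul (((r / (n + 1) : ℝ) : ℂ))⁻¹).aestronglyMeasurable
      rw [Complex.add_re, Complex.ofReal_re]; linarith
    · refine Eventually.of_forall fun z => ?_
      have h1 := ((hderiv z a ha).hasDerivAt).tendsto_slope_zero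
      have h2 : Tendsto (fun n : ℕ => ((r / (n + 1) : ℝ) : ℂ)) atTop (𝓝[≠] 0) := by
        refine tendsto_nhdsWithin_iff.2 ⟨?_, Eventually.of_forall fun n => ?_⟩
        · have := (Complex.continuous_ofReal.tendsto 0).comp hu
          rw [Complex.ofReal_zero] at this
          exact this
        · exact Set.mem_compl_singleton_iff.2 (Complex.ofReal_ne_zero.2 (hun n))
      have := h1.comp h2
      simpa [Function.comp_def] using this
  · refine Eventually.of_forall fun z x hx => ?_
    have hx' : ‖x - a‖ ≤ r := by simpa [dist_eq_norm] using (Metric.mem_ball.1 hx).le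
    refine Complex.norm_deriv_le_of_forall_mem_sphere_norm_le hr0 ?_ ?_
    · refine DifferentiableOn.diffContOnCl ?_
      intro y hy
      rw [closure_ball x hr0.ne'] at hy
      have hy' : ‖y - x‖ ≤ r := by simpa [dist_eq_norm] using Metric.mem_closedBall.1 hy
      have := hball y (2 * r) (by
        calc ‖y - a‖ = ‖(y - x) + (x - a)‖ := by ring_nf
          _ ≤ _ := (norm_add_le _ _).trans (by linarith))
      exact (hderiv z y (by linarith [this.1])).differentiableWithinAt
    · intro y hy
      have hy' : ‖y - x‖ ≤ r := by simpa [dist_eq_norm] using (Metric.mem_sphere.1 hy).le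
      have := hball y (2 * r) (by
        calc ‖y - a‖ = ‖(y - x) + (x - a)‖ := by ring_nf
          _ ≤ _ := (norm_add_le _ _).trans (by linarith))
      exact hW y this.1 this.2 z
  · exact ((integrable_exp_abs (by positivity)).const_mul C).div_const r
  · refine Eventually.of_forall fun z x hx => ?_
    have hx' : ‖x - a‖ ≤ r := by simpa [dist_eq_norm] using (Metric.mem_ball.1 hx).le
    have := hball x r hx'
    exact (hderiv z x (by linarith [this.1])).hasDerivAt

lemma gamma_le_shift (N : ℕ) (s : ℂ) (hs : 1 ≤ |s.im|) : ‖Complex.Gamma s‖ ≤ ‖Complex.Gamma (s + N)‖ := by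
  induction N with
  | zero => simp
  | succ N ih =>
    refine ih.trans ?_
    have him : 1 ≤ ‖s + N‖ := by
      refine hs.trans ?_
      have := Complex.abs_im_le_norm (s + N)
      simpa using this
    have hne : s + N ≠ 0 := by
      intro h; rw [h] at him; norm_num at him
    rw [show s + ((N + 1 : ℕ) : ℂ) = (s + N) + 1 by push_cast; ring, Complex.Gamma_add_one _ hne, norm_mul]
    nlinarith [norm_nonneg (Complex.Gamma (s + N))]

lemma inv_gamma_bound (β : ℝ) : ∃ C : ℝ, 0 < C ∧ ∀ s : ℂ, |s.re| ≤ β → 1 ≤ |s.im| →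
    ‖(Complex.Gamma s)⁻¹‖ ≤ C * Real.exp (3 * Real.pi / 5 * |s.im|) := by
  have hpi := Real.pi_pos
  obtain ⟨N, hN⟩ := exists_nat_gt β
  obtain ⟨C, hC, h⟩ := gamma_bound 1 (1 + β + N) one_pos
  refine ⟨C, hC, fun s h1 h2 => ?_⟩
  have hre := abs_le.1 h1
  have hrefl := Complex.Gamma_mul_Gamma_one_sub s
  have hsin0 : Complex.sin (Real.pi * s) ≠ 0 := by
    intro h0
    rw [Complex.sin_eq_zero_iff] at h0
    obtain ⟨k, hk⟩ := h0
    have : s = k := by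
      have : (Real.pi : ℂ) ≠ 0 := by exact_mod_cast hpi.ne'
      apply mul_left_cancel₀ this
      rw [hk]; ring
    rw [this] at h2
    norm_num at h2
  have hpi' : (Real.pi : ℂ) ≠ 0 := by exact_mod_cast hpi.ne'
  have hG : Complex.Gamma s ≠ 0 := by
    intro h0
    rw [h0, zero_mul] at hrefl
    exact (div_ne_zero hpi' hsin0) hrefl.symm
  have e : (Complex.Gamma s)⁻¹ = Complex.Gamma (1 - s) * Complex.sin (Real.pi * s) / Real.pi := by
    rw [eq_div_iff hsin0] at hrefl
    rw [eq_div_iff hpi', inv_mul_eq_iff_eq_mul₀ hG]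
    linear_combination -hrefl
  have hg : ‖Complex.Gamma (1 - s)‖ ≤ C * Real.exp (-(2 * Real.pi / 5) * |s.im|) := by
    refine (gamma_le_shift N (1 - s) (by simpa using h2)).trans ?_
    have := h (1 - s + N) (by simp; linarith) (by simp; linarith)
    simpa using this
  have hsin : ‖Complex.sin (Real.pi * s)‖ ≤ Real.exp (Real.pi * |s.im|) := by
    have e1 : ‖Complex.exp (-(Real.pi * s) * I)‖ ≤ Real.exp (Real.pi * |s.im|) := by
      rw [Complex.norm_exp]
      refine Real.exp_le_exp.2 ?_
      simp
      gcongr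
      exact le_abs_self _
    have e2 : ‖Complex.exp ((Real.pi * s) * I)‖ ≤ Real.exp (Real.pi * |s.im|) := by
      rw [Complex.norm_exp]
      refine Real.exp_le_exp.2 ?_
      simp
      rw [← mul_neg]
      gcongr
      exact neg_le_abs _
    unfold Complex.sin
    rw [norm_div, norm_mul, Complex.norm_I, mul_one, Complex.norm_two]
    have := norm_sub_le (Complex.exp (-(Real.pi * s) * I)) (Complex.exp ((Real.pi * s) * I))
    linarith
  rw [e, norm_div, norm_mul, Complex.norm_real, Real.norm_eq_abs, abs_of_pos hpi]
  calc _ ≤ ‖Complex.Gamma (1 - s)‖ * ‖Complex.sin (Real.pi * s)‖ := div_le_self (by positivity) (by linarith [Real.pi_gt_three])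
    _ ≤ (C * Real.exp (-(2 * Real.pi / 5) * |s.im|)) * Real.exp (Real.pi * |s.im|) := by gcongr
    _ = _ := by rw [mul_assoc, ← Real.exp_add]; congr 2; ring

lemma strip_const (J : ℂ → ℂ) (b : ℝ) (hd : ∀ s : ℂ, b ≤ s.re → s.re ≤ b + 1 → DifferentiableAt ℂ J s)
    (hper : ∀ s : ℂ, s.re = b → J (s + 1) = J s) (C κ Y : ℝ) (hκ : κ < 2 * Real.pi)
    (hb : ∀ s : ℂ, b ≤ s.re → s.re ≤ b + 1 → Y ≤ |s.im| → ‖J s‖ ≤ C * Real.exp (κ * |s.im|)) :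
    ∃ v : ℂ, ∀ s : ℂ, b ≤ s.re → s.re < b + 1 → J s = v := by
  set cf : ℤ → ℝ → ℂ := fun n y => ∫ x : ℝ in b..(b + 1), J (x + y * I) * Complex.exp (-(2 * Real.pi * I * n) * (x + y * I)) with hcf
  have hindep : ∀ n y y', cf n y = cf n y' := by
    intro n y y'
    have hr := Complex.integral_boundary_rect_eq_zero_of_differentiableOn
      (fun s => J s * Complex.exp (-(2 * Real.pi * I * n) * s)) (b + y * I) ((b + 1 : ℝ) + y' * I) (by
      intro s hs
      have := hs.1
      simp [uIcc_of_le] at this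
      have h1 := hd s this.1 this.2
      have : DifferentiableAt ℂ (fun s => Complex.exp (-(2 * Real.pi * I * n) * s)) s := by fun_prop
      exact (h1.mul this).differentiableWithinAt)
    have hv : (∫ t : ℝ in y..y', J ((b + 1 : ℝ) + t * I) * Complex.exp (-(2 * Real.pi * I * n) * ((b + 1 : ℝ) + t * I))) =
        ∫ t : ℝ in y..y', J (b + t * I) * Complex.exp (-(2 * Real.pi * I * n) * (b + t * I)) := by
      refine intervalIntegral.integral_congr fun t _ => ?_
      have e1 : (((b + 1 : ℝ) : ℂ) + t * I) = (b + t * I) + 1 := by push_cast; ring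
      simp only [e1]
      rw [hper _ (by simp), mul_add, Complex.exp_add]
      have : Complex.exp (-(2 * Real.pi * I * n) * 1) = 1 := by
        rw [Complex.exp_eq_one_iff]
        exact ⟨-n, by push_cast; ring⟩
      rw [this, mul_one]
    have r1 : ((b : ℂ) + y * I).re = b := by simp
    have r2 : ((b : ℂ) + y * I).im = y := by simp
    have r3 : (((b + 1 : ℝ) : ℂ) + y' * I).re = b + 1 := by simp
    have r4 : (((b + 1 : ℝ) : ℂ) + y' * I).im = y' := by simp
    rw [r1, r2, r3, r4, hv] at hr
    simp only [hcf]
    rw [add_sub_assoc, sub_self, add_zero] at hr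
    exact sub_eq_zero.1 hr
  have hbd : ∀ n : ℤ, ∀ y : ℝ, Y ≤ |y| → ‖cf n y‖ ≤ C * Real.exp (κ * |y| + 2 * Real.pi * n * y) := by
    intro n y hy
    have := intervalIntegral.norm_integral_le_of_norm_le_const (a := b) (b := b + 1)
        (f := fun x : ℝ => J (x + y * I) * Complex.exp (-(2 * Real.pi * I * n) * (x + y * I)))
        (C := C * Real.exp (κ * |y| + 2 * Real.pi * n * y)) (by
        intro x hx
        rw [uIoc_of_le (by linarith)] at hx
        have h1 := hb (x + y * I) (by simpa using hx.1.le) (by simpa using hx.2) (by simpa using hy)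
        have h2 : ‖Complex.exp (-(2 * Real.pi * I * n) * (x + y * I))‖ = Real.exp (2 * Real.pi * n * y) := by
          rw [Complex.norm_exp]; congr 1; simp
        rw [norm_mul, h2, Real.exp_add, ← mul_assoc]
        gcongr
        simpa using h1)
    rw [add_sub_cancel_left, abs_one, mul_one] at this
    exact this
  have hzero : ∀ n : ℤ, n ≠ 0 → ∀ y, cf n y = 0 := by
    intro n hn y
    -- choose direction
    have hlim : Tendsto (fun T : ℝ => C * Real.exp ((κ - 2 * Real.pi) * T)) atTop (𝓝 0) := by
      rw [show (0 : ℝ) = C * 0 by simp]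
      refine Tendsto.const_mul C (Real.tendsto_exp_atBot.comp ?_)
      exact tendsto_id.const_mul_atTop_of_neg (by linarith)
    have hC : 0 ≤ C := by
      have := (norm_nonneg _).trans (hb (b + (|Y| : ℝ) * I) (by simp) (by simp) (by simpa using le_abs_self Y))
      exact nonneg_of_mul_nonneg_left this (Real.exp_pos _)
    have hle : ∀ᶠ T in atTop, ‖cf n y‖ ≤ C * Real.exp ((κ - 2 * Real.pi) * T) := by
      filter_upwards [eventually_ge_atTop (max Y 0)] with T hT
      have hT0 : 0 ≤ T := (le_max_right _ _).trans hT
      have hTY : Y ≤ T := (le_max_left _ _).trans hT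
      have hpi := Real.pi_pos
      rcases lt_or_gt_of_ne hn with h | h
      · rw [hindep n y T]
        refine (hbd n T (by rwa [abs_of_nonneg hT0])).trans ?_
        have : (n : ℝ) ≤ -1 := by exact_mod_cast Int.le_sub_one_of_lt h
        refine mul_le_mul_of_nonneg_left (Real.exp_le_exp.2 ?_) hC
        rw [abs_of_nonneg hT0]
        have := mul_le_mul_of_nonneg_left this (by positivity : 0 ≤ 2 * Real.pi * T)
        linarith
      · rw [hindep n y (-T)]
        refine (hbd n (-T) (by rwa [abs_neg, abs_of_nonneg hT0])).trans ?_
        have : (1 : ℝ) ≤ n := by exact_mod_cast h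
        refine mul_le_mul_of_nonneg_left (Real.exp_le_exp.2 ?_) hC
        rw [abs_neg, abs_of_nonneg hT0]
        have := mul_le_mul_of_nonneg_left this (by positivity : 0 ≤ 2 * Real.pi * T)
        linarith
    have := ge_of_tendsto hlim hle
    exact norm_le_zero_iff.1 this
  refine ⟨cf 0 0, fun s hs1 hs2 => ?_⟩
  set y := s.im with hy
  have : Fact ((0 : ℝ) < 1) := ⟨one_pos⟩
  set φ : ℝ → ℂ := fun x => J (x + y * I) with hφ
  have hcont : ContinuousOn φ (Icc b (b + 1)) := by
    intro x hx
    refine ContinuousAt.continuousWithinAt ?_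
    refine ContinuousAt.comp (g := J) (f := fun x : ℝ => (x + y * I : ℂ)) ?_ (by fun_prop)
    exact (hd _ (by simpa using hx.1) (by simpa using hx.2)).continuousAt
  have hends : φ b = φ (b + 1) := by
    simp only [hφ]
    rw [← hper (b + y * I) (by simp)]
    congr 1; push_cast; ring
  let Φ : C(AddCircle (1 : ℝ), ℂ) := ⟨AddCircle.liftIco 1 b φ, AddCircle.liftIco_continuous hends hcont⟩
  have hcoef : ∀ n : ℤ, fourierCoeff Φ n = Complex.exp (-(2 * Real.pi * n * y)) * cf n y := by
    intro n
    have h1 : fourierCoeff Φ n = _ := fourierCoeff_liftIco_eq (T := (1 : ℝ)) (a := b) φ n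
    rw [h1, fourierCoeffOn_eq_integral]
    simp only [hcf]
    rw [← intervalIntegral.integral_const_mul]
    simp only [add_sub_cancel_left, div_one, one_smul]
    refine intervalIntegral.integral_congr fun x _ => ?_
    simp only [hφ, smul_eq_mul, fourier_coe_apply]
    rw [mul_comm, mul_left_comm, ← Complex.exp_add]
    congr 2
    push_cast
    linear_combination (2 * Real.pi * n * y : ℂ) * Complex.I_sq
  have hc0 : ∀ n : ℤ, n ≠ 0 → fourierCoeff Φ n = 0 := by
    intro n hn; rw [hcoef, hzero n hn, mul_zero]
  have hsum : Summable (fourierCoeff Φ) :=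
    summable_of_ne_finset_zero (s := {0}) fun n hn => hc0 n (by simpa using hn)
  have hs := has_pointwise_sum_fourier_series_of_summable hsum (s.re : AddCircle (1 : ℝ))
  have hs' := hasSum_single (f := fun i => fourierCoeff Φ i • fourier i (s.re : AddCircle (1 : ℝ))) 0
    (fun n hn => by rw [hc0 n hn, zero_smul])
  have := hs.unique hs'
  have hΦ : Φ (s.re : AddCircle (1 : ℝ)) = φ s.re :=
    AddCircle.liftIco_coe_apply (p := (1 : ℝ)) (a := b) (f := φ) ⟨hs1, hs2⟩
  rw [hΦ, hcoef, hindep 0 y 0] at this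
  simp only [hφ, hy, Complex.re_add_im] at this
  rw [this]
  simp

lemma pair_half (z : ℝ) : Complex.Gamma (1 / 2 + I * z) * Complex.Gamma (1 / 2 - I * z) =
    ((Real.pi / Real.cosh (Real.pi * z) : ℝ) : ℂ) := by
  have h := Complex.Gamma_mul_Gamma_one_sub (1 / 2 + I * z)
  rw [show (1 - (1 / 2 + I * z) : ℂ) = 1 / 2 - I * z by ring] at h
  rw [h, show (Real.pi * (1 / 2 + I * z) : ℂ) = (Real.pi * z : ℝ) * I + Real.pi / 2 by push_cast; ring,
      Complex.sin_add_pi_div_two, Complex.cos_mul_I]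
  push_cast
  rfl

lemma tendsto_div_cosh (l : Filter ℝ) (hl : Tendsto (fun z : ℝ => |z|) l atTop) :
    Tendsto (fun z : ℝ => z / (Real.pi * Real.cosh (Real.pi * z))) l (𝓝 0) := by
  refine squeeze_zero_norm' ?_ (tendsto_inv_atTop_zero.comp hl)
  filter_upwards [hl.eventually_gt_atTop 0] with z hz
  have hpi := Real.pi_gt_three
  have hc := Real.cosh_pos (Real.pi * z)
  rw [norm_div, Real.norm_eq_abs, Real.norm_eq_abs, abs_of_pos (by positivity : 0 < Real.pi * Real.cosh (Real.pi * z))]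
  simp only [Function.comp_apply]
  rw [div_le_iff₀ (by positivity), inv_mul_eq_div, le_div_iff₀ hz]
  have h1 : (Real.pi * |z|) ^ 2 / 2 ≤ Real.exp (Real.pi * |z|) := by
    have := Real.quadratic_le_exp_of_nonneg (x := Real.pi * |z|) (by positivity)
    have h0 : 0 ≤ Real.pi * |z| := by positivity
    linarith
  have h2 : Real.exp (Real.pi * |z|) ≤ 2 * Real.cosh (Real.pi * z) := by
    rw [Real.cosh_eq]
    rcases abs_choice z with h | h <;> rw [h]
    · linarith [Real.exp_pos (-(Real.pi * z))]
    · rw [mul_neg]; linarith [Real.exp_pos (Real.pi * z)]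
  have h3 : |z| * |z| * 9 ≤ (Real.pi * |z|) ^ 2 := by
    have h9 : 9 ≤ Real.pi ^ 2 := by nlinarith [Real.pi_gt_three]
    rw [mul_pow]
    nlinarith [mul_le_mul_of_nonneg_right h9 (sq_nonneg |z|)]
  nlinarith

lemma II_half : II (1 / 2) (1 / 2) (1 / 2) = ((2 * Real.pi ^ 2 : ℝ) : ℂ) := by
  have hpi := Real.pi_pos
  set g : ℝ → ℝ := fun z => 2 * Real.pi ^ 3 * (z * Real.sinh (Real.pi * z) / Real.cosh (Real.pi * z) ^ 2) with hg
  have hW : ∀ z : ℝ, W (1 / 2) (1 / 2) (1 / 2) z = ((g z : ℝ) : ℂ) := by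
    intro z
    have hc := (Real.cosh_pos (Real.pi * z)).ne'
    simp only [W, pr, pair_half]
    rw [show (2 * Real.pi * z : ℂ) = ((2 * (Real.pi * z) : ℝ) : ℂ) by push_cast; ring, ← Complex.ofReal_sinh,
      ← Complex.ofReal_mul, ← Complex.ofReal_mul, ← Complex.ofReal_mul, ← Complex.ofReal_mul]
    congr 1
    rw [Real.sinh_two_mul]
    simp only [hg]
    field_simp
  have h_integ : Integrable g := by
    have h := W_int (1 / 2) (1 / 2) (1 / 2) (by norm_num) (by norm_num) (by norm_num)
    have := h.re
    refine this.congr (Eventually.of_forall fun z => ?_)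
    change (W (1 / 2) (1 / 2) (1 / 2) z).re = g z
    rw [hW, Complex.ofReal_re]
  unfold II
  simp_rw [hW]
  rw [integral_complex_ofReal]
  congr 1
  set F : ℝ → ℝ := fun z => 2 * Real.pi ^ 3 * (2 / Real.pi ^ 2 * Real.arctan (Real.exp (Real.pi * z)) -
    z / (Real.pi * Real.cosh (Real.pi * z))) with hF
  have hder : ∀ z, HasDerivAt F (g z) z := by
    intro z
    have hc := Real.cosh_pos (Real.pi * z)
    have d0 : HasDerivAt (fun z : ℝ => Real.pi * z) Real.pi z := by
      simpa using (hasDerivAt_id z).const_mul Real.pi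
    have d1 := (d0.exp).arctan
    have d2 := (d0.cosh).const_mul Real.pi
    have d3 := (hasDerivAt_id z).div d2 (by positivity)
    have d4 := ((d1.const_mul (2 / Real.pi ^ 2)).sub d3).const_mul (2 * Real.pi ^ 3)
    refine d4.congr_deriv ?_
    simp only [hg, id]
    have he : 1 / (1 + Real.exp (Real.pi * z) ^ 2) * (Real.exp (Real.pi * z) * Real.pi) =
        Real.pi / (2 * Real.cosh (Real.pi * z)) := by
      rw [Real.cosh_eq, Real.exp_neg]
      have := Real.exp_pos (Real.pi * z)
      field_simp
      ring
    rw [he]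
    field_simp
    ring
  have l1 : Tendsto F atTop (𝓝 (2 * Real.pi ^ 3 * (2 / Real.pi ^ 2 * (Real.pi / 2) - 0))) := by
    refine Tendsto.const_mul _ (Tendsto.sub (Tendsto.const_mul _ ?_) (tendsto_div_cosh _ tendsto_abs_atTop_atTop))
    exact (tendsto_nhds_of_tendsto_nhdsWithin Real.tendsto_arctan_atTop).comp
      (Real.tendsto_exp_atTop.comp (tendsto_id.const_mul_atTop hpi))
  have l2 : Tendsto F atBot (𝓝 (2 * Real.pi ^ 3 * (2 / Real.pi ^ 2 * 0 - 0))) := by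
    refine Tendsto.const_mul _ (Tendsto.sub (Tendsto.const_mul _ ?_) (tendsto_div_cosh _ tendsto_abs_atBot_atTop))
    have h := (Real.continuous_arctan.tendsto 0).comp
      (Real.tendsto_exp_atBot.comp (tendsto_id.const_mul_atBot hpi))
    simpa [Function.comp_def] using h
  rw [integral_of_hasDerivAt_of_tendsto hder h_integ l2 l1]
  field_simp
  ring

/-- The Gamma product on the right hand side. -/
noncomputable def R (a b c : ℂ) : ℂ :=
  Complex.Gamma (a + b) * Complex.Gamma (a + c) * Complex.Gamma (b + c)

lemma gamma_ne {s : ℂ} (hs : 0 < s.re) : Complex.Gamma s ≠ 0 := Complex.Gamma_ne_zero_of_re_pos hs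

lemma II_swap12 (a b c : ℂ) : II a b c = II b a c := by
  unfold II
  congr 1
  funext z
  simp only [W, pr]; ring

lemma II_swap13 (a b c : ℂ) : II a b c = II c b a := by
  unfold II
  congr 1
  funext z
  simp only [W, pr]; ring

/-- The ratio which turns out to be constant. -/
noncomputable def J (b c a : ℂ) : ℂ := II a b c * ((Complex.Gamma (a + b))⁻¹ * (Complex.Gamma (a + c))⁻¹)

lemma J_add_one (a b c : ℂ) (ha : 0 < a.re) (hb : 0 < b.re) (hc : 0 < c.re) : J b c (a + 1) = J b c a := by
  have n1 : a + b ≠ 0 := by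
    intro h0
    have := congrArg Complex.re h0
    simp at this; linarith
  have n2 : a + c ≠ 0 := by
    intro h0
    have := congrArg Complex.re h0
    simp at this; linarith
  unfold J
  rw [II_rec a b c ha hb hc, show a + 1 + b = (a + b) + 1 by ring, show a + 1 + c = (a + c) + 1 by ring,
    Complex.Gamma_add_one _ n1, Complex.Gamma_add_one _ n2]
  have g1 := gamma_ne (s := a + b) (by simp; linarith)
  have g2 := gamma_ne (s := a + c) (by simp; linarith)
  field_simp

lemma J_add_nat (n : ℕ) (a b c : ℂ) (ha : 0 < a.re) (hb : 0 < b.re) (hc : 0 < c.re) :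
    J b c (a + n) = J b c a := by
  induction n with
  | zero => simp
  | succ n ih =>
    rw [← ih, ← J_add_one (a + n) b c (by simp; positivity) hb hc]
    congr 1; push_cast; ring

lemma J_strip (β : ℝ) (hβ : 0 < β) (b c : ℂ) (hb : 0 < b.re) (hc : 0 < c.re) :
    ∃ v : ℂ, ∀ s : ℂ, β ≤ s.re → s.re < β + 1 → J b c s = v := by
  have hpi := Real.pi_pos
  obtain ⟨C0, hC0, h0⟩ := W_bound β (β + 1) hβ b c hb hc
  set M : ℝ := ∫ z : ℝ, C0 * Real.exp (-(Real.pi / 5) * |z|) with hM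
  have hMI : ∀ a : ℂ, β ≤ a.re → a.re ≤ β + 1 → ‖II a b c‖ ≤ M := fun a h1 h2 =>
    norm_integral_le_of_norm_le ((integrable_exp_abs (by positivity)).const_mul C0)
      (Eventually.of_forall (h0 a h1 h2))
  have hM0 : 0 ≤ M := (norm_nonneg _).trans (hMI β (by simp) (by simp))
  have hinv : ∀ d : ℂ, 0 < d.re → ∃ C : ℝ, 0 < C ∧ ∀ s : ℂ, β ≤ s.re → s.re ≤ β + 1 → 1 + |d.im| ≤ |s.im| →
      ‖(Complex.Gamma (s + d))⁻¹‖ ≤ C * Real.exp (3 * Real.pi / 5 * |s.im|) := by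
    intro d hd
    obtain ⟨C, hC, h⟩ := inv_gamma_bound (β + 1 + d.re)
    refine ⟨C * Real.exp (3 * Real.pi / 5 * |d.im|), by positivity, fun s h1 h2 h3 => ?_⟩
    have e : (s + d).im = s.im + d.im := Complex.add_im _ _
    have k := h (s + d) (by rw [Complex.add_re, abs_of_pos (by linarith)]; linarith) (by
      rw [e]
      have := abs_sub_abs_le_abs_sub s.im (-d.im)
      rw [abs_neg, sub_neg_eq_add] at this
      linarith)
    refine k.trans ?_
    rw [mul_assoc, ← Real.exp_add, e]
    refine mul_le_mul_of_nonneg_left (Real.exp_le_exp.2 ?_) hC.le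
    have := abs_add_le s.im d.im
    nlinarith
  obtain ⟨C1, hC1, h1⟩ := hinv b hb
  obtain ⟨C2, hC2, h2⟩ := hinv c hc
  refine strip_const (J b c) β ?_ ?_ (M * (C1 * C2)) (6 * Real.pi / 5) (1 + |b.im| + |c.im|) (by linarith) ?_
  · intro s hs1 hs2
    have hs : 0 < s.re := by linarith
    have d : ∀ d : ℂ, 0 < d.re → DifferentiableAt ℂ (fun s => (Complex.Gamma (s + d))⁻¹) s := by
      intro d hd
      have hp : 0 < (s + d).re := by simp; linarith
      exact (DifferentiableAt.comp (g := Complex.Gamma) (f := fun s => s + d) s (gamma_diff hp) (by fun_prop)).inv (gamma_ne hp)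
    exact (II_diff s b c hs hb hc).mul ((d b hb).mul (d c hc))
  · intro s hs
    exact J_add_one s b c (by linarith) hb hc
  · intro s hs1 hs2 hs3
    unfold J
    rw [norm_mul, norm_mul]
    calc _ ≤ M * ((C1 * Real.exp (3 * Real.pi / 5 * |s.im|)) * (C2 * Real.exp (3 * Real.pi / 5 * |s.im|))) := by
          have k0 := hMI s hs1 hs2
          have k1 := h1 s hs1 hs2 (by linarith [abs_nonneg c.im])
          have k2 := h2 s hs1 hs2 (by linarith [abs_nonneg b.im])
          gcongr
      _ = M * (C1 * C2) * (Real.exp (3 * Real.pi / 5 * |s.im|) * Real.exp (3 * Real.pi / 5 * |s.im|)) := by ring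
      _ = _ := by rw [← Real.exp_add]; congr 2; ring

lemma J_const (a a' b c : ℂ) (ha : 0 < a.re) (ha' : 0 < a'.re) (hb : 0 < b.re) (hc : 0 < c.re) :
    J b c a = J b c a' := by
  wlog h : a.re ≤ a'.re generalizing a a'
  · exact (this a' a ha' ha (by linarith)).symm
  set n := ⌊a'.re - a.re⌋₊ with hn
  have h1 : (n : ℝ) ≤ a'.re - a.re := Nat.floor_le (by linarith)
  have h2 : a'.re - a.re < n + 1 := Nat.lt_floor_add_one _
  obtain ⟨v, hv⟩ := J_strip (a.re + n) (by positivity) b c hb hc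
  rw [← J_add_nat n a b c ha hb hc, hv (a + n) (by simp) (by simp), hv a' (by linarith) (by linarith)]

lemma T_step (a a' b c : ℂ) (ha : 0 < a.re) (ha' : 0 < a'.re) (hb : 0 < b.re) (hc : 0 < c.re)
    (h : II a' b c = ((2 * Real.pi ^ 2 : ℝ) : ℂ) * R a' b c) : II a b c = ((2 * Real.pi ^ 2 : ℝ) : ℂ) * R a b c := by
  have k := J_const a a' b c ha ha' hb hc
  unfold J at k
  rw [h] at k
  unfold R at k ⊢
  have g1 := gamma_ne (s := a + b) (by simp; linarith)
  have g2 := gamma_ne (s := a + c) (by simp; linarith)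
  have g3 := gamma_ne (s := a' + b) (by simp; linarith)
  have g4 := gamma_ne (s := a' + c) (by simp; linarith)
  field_simp at k
  rw [k]; ring

lemma II_eq (a b c : ℂ) (ha : 0 < a.re) (hb : 0 < b.re) (hc : 0 < c.re) :
    II a b c = ((2 * Real.pi ^ 2 : ℝ) : ℂ) * R a b c := by
  have hh : 0 < (1 / 2 : ℂ).re := by norm_num
  have s0 : II (1 / 2) (1 / 2) (1 / 2) = ((2 * Real.pi ^ 2 : ℝ) : ℂ) * R (1 / 2) (1 / 2) (1 / 2) := by
    rw [II_half, R, add_halves, Complex.Gamma_one]; ring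
  have s1 := T_step c (1 / 2) (1 / 2) (1 / 2) hc hh hh hh s0
  have s2 : II (1 / 2) (1 / 2) c = ((2 * Real.pi ^ 2 : ℝ) : ℂ) * R (1 / 2) (1 / 2) c := by
    rw [II_swap13, s1]; unfold R; rw [add_comm c (1 / 2)]; ring
  have s3 := T_step b (1 / 2) (1 / 2) c hb hh hh hc s2
  have s4 : II (1 / 2) b c = ((2 * Real.pi ^ 2 : ℝ) : ℂ) * R (1 / 2) b c := by
    rw [II_swap12, s3]; unfold R; rw [add_comm b (1 / 2)]; ring
  exact T_step a (1 / 2) b c ha hh hb hc s4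

lemma weight (z : ℝ) : (Complex.Gamma (2 * I * z) * Complex.Gamma (-2 * I * z))⁻¹ =
    2 / Real.pi * (z * Complex.sinh (2 * Real.pi * z)) := by
  by_cases hz : z = 0
  · simp [hz]
  have hz' : (z : ℂ) ≠ 0 := by exact_mod_cast hz
  have hpi : (Real.pi : ℂ) ≠ 0 := by exact_mod_cast Real.pi_pos.ne'
  have h := Complex.Gamma_mul_Gamma_one_sub (2 * I * z)
  have hne : (-2 * I * z : ℂ) ≠ 0 := by simp [hz]
  have hS : Complex.sinh (2 * Real.pi * z) ≠ 0 := by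
    rw [show (2 * Real.pi * z : ℂ) = ((2 * Real.pi * z : ℝ) : ℂ) by push_cast; ring, ← Complex.ofReal_sinh]
    have : Real.sinh (2 * Real.pi * z) ≠ 0 := by
      rw [Ne, Real.sinh_eq_zero]
      have := Real.pi_pos.ne'
      positivity
    exact_mod_cast this
  rw [show (1 - 2 * I * z : ℂ) = (-2 * I * z) + 1 by ring, Complex.Gamma_add_one _ hne,
    show (Real.pi * (2 * I * z) : ℂ) = (2 * Real.pi * z) * I by ring, Complex.sin_mul_I,
    eq_div_iff (mul_ne_zero hS Complex.I_ne_zero)] at h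
  refine inv_eq_of_mul_eq_one_right ?_
  have key : Complex.Gamma (2 * I * z) * Complex.Gamma (-2 * I * z) *
      (2 * (z * Complex.sinh (2 * Real.pi * z))) = Real.pi := by
    linear_combination h + 2 * z * Complex.Gamma (2 * I * z) * Complex.Gamma (-2 * I * z) *
      Complex.sinh (2 * Real.pi * z) * Complex.I_sq
  rw [div_mul_eq_mul_div, mul_div_assoc', key, div_self hpi]
end DG
/-- The degenerate rank-one (`n = 1`) `B_n` Gustafson integral:
`(1/2π)∫_ℝ ∏_{j=1}^{3} Γ(aⱼ+iz)Γ(aⱼ-iz) / (Γ(2iz)Γ(-2iz)) dz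
 = 2 Γ(a₁+a₂)Γ(a₁+a₃)Γ(a₂+a₃)` for `Re(aⱼ) > 0`. -/
theorem degenerate_gustafson_rank_one (a₁ a₂ a₃ : ℂ)
    (h1 : 0 < a₁.re) (h2 : 0 < a₂.re) (h3 : 0 < a₃.re) :
    ((1 / (2 * Real.pi) : ℝ) : ℂ) *
      ∫ z : ℝ,
        (Complex.Gamma (a₁ + Complex.I * z) * Complex.Gamma (a₁ - Complex.I * z) *
          Complex.Gamma (a₂ + Complex.I * z) * Complex.Gamma (a₂ - Complex.I * z) *
          Complex.Gamma (a₃ + Complex.I * z) * Complex.Gamma (a₃ - Complex.I * z)) /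
        (Complex.Gamma (2 * Complex.I * z) * Complex.Gamma (-2 * Complex.I * z)) =
      2 * Complex.Gamma (a₁ + a₂) * Complex.Gamma (a₁ + a₃) * Complex.Gamma (a₂ + a₃) := by
  have hpi : (Real.pi : ℂ) ≠ 0 := by exact_mod_cast Real.pi_pos.ne'
  have hW : ∀ z : ℝ, (Complex.Gamma (a₁ + Complex.I * z) * Complex.Gamma (a₁ - Complex.I * z) *
          Complex.Gamma (a₂ + Complex.I * z) * Complex.Gamma (a₂ - Complex.I * z) *
          Complex.Gamma (a₃ + Complex.I * z) * Complex.Gamma (a₃ - Complex.I * z)) /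
        (Complex.Gamma (2 * Complex.I * z) * Complex.Gamma (-2 * Complex.I * z)) =
      2 / Real.pi * DG.W a₁ a₂ a₃ z := by
    intro z
    rw [div_eq_mul_inv, DG.weight]
    simp only [DG.W, DG.pr]
    ring
  simp_rw [hW]
  rw [integral_const_mul]
  have h := DG.II_eq a₁ a₂ a₃ h1 h2 h3
  unfold DG.II DG.R at h
  rw [h]
  push_cast
  field_simp
end
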